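/- arXiv:1607.02844 — 2 statements merged into one kernel-verified Lean document; each statement's English description precedes it below -/
import Mathlib

section
/- The Nielsen class Ni(A6, C_{2×2}^5) is nonempty, and any two of its elements are related by the equivalence relation generated by the Hurwitz moves together with simultaneous conjugation of all entries by a single element of the symmetric group S6; that is, the corresponding quotient has exactly one equivalence class. -/
/-- The `i`-th Hurwitz move on `k`-tuples of elements of a group `G`:
`(g₁,…,gₖ) ↦ (g₁,…,g_{i-1}, g_{i+1}, g_{i+1}⁻¹ g_i g_{i+1}, g_{i+2},…,gₖ)`. -/
def HurwitzMove {G : Type*} [Group G] {k : ℕ} (g h : Fin k → G) : Prop :=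
  ∃ i : ℕ, ∃ hi : i + 1 < k,
    h ⟨i, Nat.lt_of_succ_lt hi⟩ = g ⟨i + 1, hi⟩ ∧
    h ⟨i + 1, hi⟩ = (g ⟨i + 1, hi⟩)⁻¹ * g ⟨i, Nat.lt_of_succ_lt hi⟩ * g ⟨i + 1, hi⟩ ∧
    ∀ j : Fin k, (j : ℕ) ≠ i → (j : ℕ) ≠ i + 1 → h j = g j

/-- Hurwitz equivalence: the equivalence relation generated by the Hurwitz moves. -/
def HurwitzEquiv {G : Type*} [Group G] {k : ℕ} (g h : Fin k → G) : Prop :=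
  Relation.EqvGen HurwitzMove g h

/-- The Nielsen class `Ni(A₆, C_{2×2}^k)`: `k`-tuples of order-2 elements of `A₆`
(products of two disjoint transpositions) with product `1` generating `A₆`. -/
def NielsenSet (k : ℕ) : Set (Fin k → Equiv.Perm (Fin 6)) :=
  {g | (∀ i, g i ∈ alternatingGroup (Fin 6)) ∧ (∀ i, orderOf (g i) = 2) ∧
       (List.ofFn g).prod = 1 ∧
       Subgroup.closure (Set.range g) = alternatingGroup (Fin 6)}

/-- One step of the absolute equivalence: a Hurwitz move, or simultaneous
conjugation of all entries by a single element of `S₆`. -/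
def AbsRel (k : ℕ) (g h : Fin k → Equiv.Perm (Fin 6)) : Prop :=
  HurwitzMove g h ∨ ∃ s : Equiv.Perm (Fin 6), h = fun i => s⁻¹ * g i * s

/-- One step of the inner equivalence: a Hurwitz move, or simultaneous
conjugation of all entries by a single element of `A₆`. -/
def InnerRel (k : ℕ) (g h : Fin k → Equiv.Perm (Fin 6)) : Prop :=
  HurwitzMove g h ∨
    ∃ s ∈ alternatingGroup (Fin 6), h = fun i => s⁻¹ * g i * s

/-- The set of fixed points of a permutation. -/
def FixedPts {n : ℕ} (g : Equiv.Perm (Fin n)) : Set (Fin n) := {x | g x = x}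

namespace A6Proof

open Equiv

/-! ### Numerical encoding of permutations of six letters -/

/-- The code of a permutation: its values as base-8 digits. -/
def code (p : Perm (Fin 6)) : ℕ := ∑ i : Fin 6, (p i : ℕ) * 8 ^ (i : ℕ)

/-- The `i`-th digit. -/
def dig (x i : ℕ) : ℕ := Nat.mod (Nat.div x (Nat.pow 8 i)) 8

/-- Product of codes. -/
def mulc (x y : ℕ) : ℕ :=
  Nat.add (dig x (dig y 0)) (Nat.mul 8 (Nat.add (dig x (dig y 1)) (Nat.mul 8
  (Nat.add (dig x (dig y 2)) (Nat.mul 8 (Nat.add (dig x (dig y 3)) (Nat.mul 8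
  (Nat.add (dig x (dig y 4)) (Nat.mul 8 (dig x (dig y 5)))))))))))

/-- Inverse of a code. -/
def invc (x : ℕ) : ℕ :=
  Nat.add (Nat.pow 8 (dig x 1)) (Nat.add (Nat.mul 2 (Nat.pow 8 (dig x 2)))
  (Nat.add (Nat.mul 3 (Nat.pow 8 (dig x 3))) (Nat.add (Nat.mul 4 (Nat.pow 8 (dig x 4)))
  (Nat.mul 5 (Nat.pow 8 (dig x 5))))))

/-- Conjugate of `x` by `s`. -/
def cj (s x : ℕ) : ℕ := mulc (invc s) (mulc x s)

/-- The code of the identity. -/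
def idc : ℕ := 181896

lemma code_eq (p : Perm (Fin 6)) : code p = (p 0 : ℕ) + 8 * ((p 1 : ℕ) + 8 * ((p 2 : ℕ) +
    8 * ((p 3 : ℕ) + 8 * ((p 4 : ℕ) + 8 * (p 5 : ℕ))))) := by
  rw [code, Fin.sum_univ_six]
  norm_num
  ring

lemma dig_eq (x i : ℕ) : dig x i = x / 8 ^ i % 8 := rfl

lemma dig_code (p : Perm (Fin 6)) (i : Fin 6) : dig (code p) i = p i := by
  have h0 := (p 0).isLt
  have h1 := (p 1).isLt
  have h2 := (p 2).isLt
  have h3 := (p 3).isLt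
  have h4 := (p 4).isLt
  have h5 := (p 5).isLt
  rw [dig_eq, code_eq]
  have hi : i = 0 ∨ i = 1 ∨ i = 2 ∨ i = 3 ∨ i = 4 ∨ i = 5 := by revert i; decide
  rcases hi with rfl | rfl | rfl | rfl | rfl | rfl <;> norm_num <;> omega

lemma code_mul (p q : Perm (Fin 6)) : code (p * q) = mulc (code p) (code q) := by
  have h0 := dig_code q 0
  have h1 := dig_code q 1
  have h2 := dig_code q 2
  have h3 := dig_code q 3
  have h4 := dig_code q 4
  have h5 := dig_code q 5
  norm_num at h0 h1 h2 h3 h4 h5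
  rw [mulc, h0, h1, h2, h3, h4, h5]
  simp only [dig_code]
  rw [code_eq]
  rfl

lemma code_inv (p : Perm (Fin 6)) : code p⁻¹ = invc (code p) := by
  have h1 := dig_code p 1
  have h2 := dig_code p 2
  have h3 := dig_code p 3
  have h4 := dig_code p 4
  have h5 := dig_code p 5
  norm_num at h1 h2 h3 h4 h5
  rw [invc, h1, h2, h3, h4, h5, code, ← Equiv.sum_comp p]
  simp only [Perm.coe_inv, Equiv.symm_apply_apply]
  simp only [Fin.sum_univ_six]
  simp
  ring

lemma code_conj (s p : Perm (Fin 6)) : code (s⁻¹ * p * s) = cj (code s) (code p) := by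
  rw [mul_assoc, code_mul, code_mul, code_inv]; rfl

lemma code_inj {p q : Perm (Fin 6)} (h : code p = code q) : p = q := by
  ext i
  rw [← dig_code p i, h, dig_code]

lemma code_one : code 1 = idc := by
  rw [code_eq]; rfl

/-- Validity of a code. -/
def valid (x : ℕ) : Bool :=
  Nat.blt x 262144 && [0, 1, 2, 3, 4, 5].all fun i =>
    Nat.blt (dig x i) 6 && Nat.beq (dig (invc x) (dig x i)) i

lemma exists_of_valid {x : ℕ} (h : valid x = true) : ∃ p : Perm (Fin 6), code p = x := by
  simp only [valid, Bool.and_eq_true, List.all_eq_true, Nat.blt_eq, Nat.beq_eq] at h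
  obtain ⟨hx, h⟩ := h
  have h' : ∀ i : Fin 6, dig x i < 6 ∧ dig (invc x) (dig x i) = i := by
    intro i
    apply h
    fin_cases i <;> simp
  let f : Fin 6 → Fin 6 := fun i => ⟨dig x i, (h' i).1⟩
  have hf : Function.Injective f := by
    intro i j hij
    have hd : dig x i = dig x j := congrArg Fin.val hij
    apply Fin.ext
    rw [← (h' i).2, hd, (h' j).2]
  refine ⟨Equiv.ofBijective f (Finite.injective_iff_bijective.mp hf), ?_⟩
  rw [code_eq]
  simp only [Equiv.ofBijective_apply, f, dig_eq]
  norm_num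
  omega

/-! ### Tables -/

/-- Codes of the 45 double transpositions, each with the bit mask of the structures in `structTab` it preserves. -/
def invTab : List (ℕ × ℕ) := [
    (152776, 247390130995779), (109320, 864216154178819), (80200, 3390893874808963),
    (153168, 2850003798462537), (178256, 360768663982241), (117328, 1284305817440529),
    (152216, 1442696812175429), (172824, 2394933894849569), (82776, 637861699790865),
    (105120, 2340035739402501), (169184, 1690284380406305), (71520, 426886329288713),
    (47272, 713033408217221), (50408, 2534931574587921), (42792, 1199018369909769),
    (153217, 211351047832140), (178305, 3378320620193956), (117377, 844786248516884),
    (181441, 211931019412080), (173825, 845113236456744), (83777, 3378120702888088),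
    (153098, 1408562458927178), (178186, 708159106875554), (117258, 2324470962471186),
    (180762, 1413972106551408), (169506, 2327667227640104), (50730, 706994642256024),
    (151691, 2815996515848262), (172299, 1214003175261218), (82251, 431180659050514),
    (180307, 2841138199531632), (168099, 440906587326500), (49323, 1206181976900628),
    (101004, 1269121094783238), (165068, 2568738939896354), (67404, 642409013192714),
    (165460, 1310618972328232), (164508, 670704517785636), (34476, 2544308564034060),
    (14477, 356801322160262), (17613, 1724618650960402), (9997, 2410698589086730),
    (18005, 404628945506456), (17053, 2432137442632724), (5797, 1710878750687756)]

/-- Representatives (with masks) of the second entry when the first one is `(0 1)(2 3)`. -/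
def repTab : List (ℕ × ℕ) := [
    (152776, 247390130995779), (109320, 864216154178819), (153168, 2850003798462537),
    (178256, 360768663982241), (105120, 2340035739402501), (169184, 1690284380406305),
    (181441, 211931019412080), (180762, 1413972106551408)]

/-- Sets of permutations whose stabilizers under conjugation are the maximal subgroups of `A₆`. -/
def structTab : List (List ℕ) := [
    [181889, 181770, 180363, 165516, 18061], [181889, 181840, 180888, 169632, 50856],
    [181770, 181840, 181448, 173832, 83784], [180363, 180888, 181448, 178312, 117384],
    [165516, 169632, 173832, 178312, 153224], [18061, 50856, 83784, 117384, 153224], [153224],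
    [178312], [117384], [181448], [173832], [83784], [181840], [180888], [169632], [50856],
    [181889], [181770], [180363], [165516], [18061], [152769], [109313], [80193], [152090],
    [104994], [47146], [151635], [69987], [41259], [100948], [66396], [34028], [14421], [8989],
    [5349], [181889, 181770, 181840, 178312, 117384, 153224],
    [181889, 180363, 180888, 173832, 83784, 153224],
    [181889, 165516, 169632, 181448, 83784, 117384],
    [181889, 18061, 50856, 181448, 173832, 178312],
    [181770, 180363, 181448, 169632, 50856, 153224],
    [181770, 165516, 173832, 180888, 50856, 117384],
    [181770, 18061, 83784, 180888, 169632, 178312],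
    [180363, 165516, 178312, 181840, 50856, 83784],
    [180363, 18061, 117384, 181840, 169632, 173832],
    [165516, 18061, 153224, 181840, 180888, 181448], [152769, 104994, 41259, 66396, 14421],
    [152769, 47146, 69987, 100948, 8989], [109313, 152090, 69987, 34028, 14421],
    [109313, 47146, 151635, 66396, 5349], [80193, 152090, 41259, 100948, 5349],
    [80193, 104994, 151635, 34028, 8989]]

/-- For each double transposition, the code of a permutation conjugating it to `(0 1)(2 3)`. -/
def conjA : List (ℕ × ℕ) := [
    (152776, 35610), (109320, 35554), (80200, 35050), (153168, 101137), (178256, 166097),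
    (117328, 133841), (152216, 68377), (172824, 166041), (82776, 133785), (105120, 68321),
    (169184, 165537), (71520, 101025), (47272, 67817), (50408, 132777), (42792, 100521),
    (153217, 109320), (178305, 174280), (117377, 142024), (181441, 181896), (173825, 178312),
    (83777, 146056), (153098, 105232), (178186, 170192), (117258, 137936), (180762, 181840),
    (169506, 178256), (50730, 146000), (151691, 72472), (172299, 170136), (82251, 137880),
    (180307, 181336), (168099, 174168), (49323, 141912), (101004, 72416), (165068, 169632),
    (67404, 105120), (165460, 177248), (164508, 173664), (34476, 109152), (14477, 71912),
    (17613, 136872), (9997, 104616), (18005, 144488), (17053, 140904), (5797, 108648)]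

/-- For each double transposition, the code of an element of the centralizer of `(0 1)(2 3)` conjugating it to its representative. -/
def conjB : List (ℕ × ℕ) := [
    (152776, 181896), (109320, 181896), (80200, 153224), (153168, 181896), (178256, 181896),
    (117328, 153224), (152216, 181448), (172824, 181448), (82776, 152776), (105120, 181896),
    (169184, 181896), (71520, 181448), (47272, 153224), (50408, 153224), (42792, 152776),
    (153217, 180762), (178305, 180762), (117377, 152090), (181441, 181896), (173825, 180755),
    (83777, 152083), (153098, 181889), (178186, 181889), (117258, 153217), (180762, 181896),
    (169506, 180755), (50730, 152083), (151691, 181441), (172299, 181441), (82251, 152769),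
    (180307, 181448), (168099, 180762), (49323, 152090), (101004, 181889), (165068, 181889),
    (67404, 181441), (165460, 180307), (164508, 180314), (34476, 180762), (14477, 153217),
    (17613, 153217), (9997, 152769), (18005, 151635), (17053, 151642), (5797, 152090)]

/-- Braid words bringing the first two entries to a pair with product of order 5. -/
def wordB : List (List ℕ) := [
    [], [1], [0, 1], [1, 1], [2, 1], [0, 2, 1], [2, 1, 1], [2, 2, 1]]

/-- Third entry, fourth entry, and a braid word leading to the base tuple. -/
def wordC : List (ℕ × ℕ × List ℕ) := [
    (152776, 152216, [0, 1, 2, 3, 3, 1]), (152776, 172824, [0, 1, 0, 0, 2]),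
    (152776, 173825, [1, 1, 3, 0, 2]), (152776, 83777, [2, 3, 3, 3, 2, 1]),
    (152776, 151691, [0, 1, 0, 3, 0, 2]), (152776, 82251, [1, 1, 0, 2]),
    (109320, 105120, [0, 1, 2, 1]), (109320, 178305, [2, 1, 1, 0, 3]),
    (109320, 151691, [2, 2, 2, 3, 3, 1]), (109320, 34476, [0, 2, 2, 3, 1]),
    (109320, 17053, [3, 0, 2, 2, 3, 1]), (80200, 50408, [3, 3, 3, 3, 2, 2]),
    (80200, 117377, [3, 3, 3, 2, 2]), (80200, 180762, [3, 2, 2]), (80200, 82251, [3, 3, 2, 2]),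
    (80200, 18005, [2, 2]), (153168, 152776, [2, 0, 1, 2, 3, 3, 1]),
    (153168, 80200, [3, 2, 0, 2, 3, 3]), (153168, 117377, [2, 0, 2, 3, 3]),
    (153168, 173825, [0, 0, 0, 0, 2, 3]), (117328, 152776, [2, 0, 1, 0, 0, 2]),
    (117328, 109320, [0, 1, 2, 1, 1]), (117328, 178305, [0, 1, 1, 2, 3]),
    (117328, 83777, [3, 0, 1, 2, 1, 1]), (152216, 153168, [0, 1, 2, 3, 3]),
    (152216, 173825, [0, 3, 2, 0, 2]), (152216, 50730, [2, 2, 0, 2]),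
    (152216, 67404, [0, 2, 0, 2]), (152216, 5797, [2, 2, 3]), (172824, 105120, [0, 0, 0, 3]),
    (172824, 71520, [0, 0, 3, 3, 1]), (172824, 117377, [0, 0, 0]), (172824, 83777, [0, 0, 3, 1]),
    (172824, 101004, [1, 0, 0, 1]), (172824, 67404, [0, 0, 1]), (105120, 153168, [3, 3, 0, 2]),
    (105120, 117328, [0, 1, 2]), (105120, 178305, [2, 1, 1, 0]), (105120, 117377, [3, 0, 2]),
    (105120, 153098, [0, 3, 1, 2]), (105120, 178186, [0, 2]), (71520, 47272, [3, 3, 2, 3, 1]),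
    (71520, 83777, [3, 2, 3, 1]), (71520, 178186, [2, 3, 1]), (71520, 18005, [2, 3, 3, 1, 2]),
    (47272, 117328, [3, 2, 2, 1]), (47272, 83777, [2, 2, 1]), (47272, 180762, [0, 2, 1]),
    (47272, 49323, [3, 0, 2, 1]), (47272, 17613, [3, 3, 0, 2, 1]),
    (50408, 172824, [0, 0, 0, 2, 3]), (50408, 117377, [3, 2, 2, 3, 3]),
    (50408, 49323, [2, 1, 2, 3, 3, 1]), (50408, 9997, [2, 2, 3, 3]),
    (178305, 152776, [1, 1, 0, 3]), (178305, 50408, [3, 3]), (178305, 153098, [1, 1, 0, 3, 3]),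
    (178305, 50730, []), (178305, 151691, [1, 1, 0]), (178305, 49323, [3]),
    (117377, 152776, [0, 0, 0, 2, 0, 2]), (117377, 178186, [0, 2, 3, 3]),
    (117377, 82251, [0, 0, 2, 2, 3]), (117377, 101004, [2, 2, 3, 0, 2]),
    (117377, 9997, [2, 0, 0, 2, 0, 2]), (173825, 80200, [0, 0, 0, 0]),
    (173825, 47272, [0, 0, 0, 3, 1]), (173825, 82251, [1, 1, 0, 1, 1]),
    (173825, 49323, [0, 0, 0, 1]), (173825, 67404, [0, 0, 0, 0, 3]),
    (173825, 34476, [1, 0, 0, 1, 1]), (83777, 109320, [3, 3, 3, 2, 1]), (83777, 178186, [2, 1]),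
    (83777, 151691, [3, 3, 2, 1]), (83777, 67404, [3, 2, 1]), (83777, 17613, [3, 3, 3, 3, 2, 1]),
    (153098, 152776, [0, 3, 0, 2, 1]), (153098, 117328, [0, 3, 3, 0, 2, 1]),
    (153098, 172824, [0, 0, 2, 1]), (153098, 71520, [3, 2, 0, 2, 1]),
    (153098, 47272, [2, 0, 2, 1]), (178186, 152776, [0, 3]), (178186, 153168, [0, 3, 3]),
    (178186, 152216, [0]), (178186, 17613, [3, 3, 1]), (178186, 18005, [1]),
    (178186, 17053, [3, 1]), (180762, 109320, [0, 3, 1]), (180762, 117328, [0, 3, 3, 1]),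
    (180762, 105120, [0, 1]), (180762, 9997, [0, 0]), (180762, 18005, [0, 0, 3]),
    (180762, 5797, [0, 0, 3, 3]), (50730, 80200, [2, 2, 2]), (50730, 153168, [3, 2, 2, 2]),
    (50730, 172824, [3, 2, 0, 2]), (50730, 105120, [2, 0, 2]), (50730, 50408, [1, 2, 3, 3]),
    (151691, 172824, [0, 0, 2, 3, 1]), (151691, 153098, [0, 0, 3, 2, 3, 1]),
    (151691, 67404, [2, 2, 3, 3, 1]), (151691, 17053, [1, 1, 0, 2, 3]),
    (82251, 152216, [2, 0, 3, 2, 0, 2]), (82251, 180762, [0, 0, 2, 3]),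
    (82251, 67404, [2, 0, 3, 0, 2]), (82251, 9997, [2, 0, 2, 2, 3]),
    (49323, 109320, [1, 0, 3, 3, 0, 2]), (49323, 172824, [0, 0, 0, 2]),
    (49323, 180762, [1, 0, 0, 2]), (49323, 50730, [1, 2, 3, 3, 1]),
    (49323, 101004, [1, 0, 0, 1, 2]), (49323, 34476, [1, 0, 3, 0, 2]),
    (101004, 152216, [2, 2, 2, 3]), (101004, 105120, [2, 3, 0, 2]), (101004, 178186, [0, 2, 3]),
    (101004, 50730, [2, 3, 2, 0, 2]), (67404, 80200, [0, 3, 0, 2]), (67404, 71520, [0, 0, 1, 2]),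
    (67404, 178186, [2, 3, 3, 1]), (67404, 180762, [0, 0, 2]), (67404, 17053, [0, 0, 3, 1, 2]),
    (67404, 5797, [0, 3, 3, 0, 2]), (34476, 105120, [2, 2, 1, 1, 0]),
    (34476, 47272, [0, 3, 2, 3, 1]), (34476, 153098, [0, 3, 3, 2, 3, 1]),
    (34476, 180762, [0, 2, 3, 1]), (17613, 109320, [3, 1, 2, 1, 1]),
    (17613, 173825, [1, 1, 2, 3]), (17613, 49323, [2, 1, 0, 0, 2]), (17613, 17053, [1, 2, 1, 1]),
    (9997, 152216, [2, 0, 2, 0, 2]), (9997, 178305, [2, 3, 3]), (9997, 49323, [0, 0, 2, 0, 2]),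
    (9997, 101004, [0, 2, 2, 3]), (9997, 5797, [2, 2, 3, 2]), (18005, 47272, [3, 1, 2]),
    (18005, 50408, [3, 3, 2]), (18005, 178305, [2]), (18005, 173825, [3, 3, 1, 2]),
    (18005, 17613, [1, 2]), (18005, 9997, [3, 2]), (17053, 71520, [2, 2, 3, 1]),
    (17053, 173825, [0, 0, 0, 2, 1]), (17053, 153098, [3, 2, 2, 3, 1]),
    (17053, 34476, [3, 3, 2, 2, 3, 1]), (17053, 18005, [1, 2, 1]), (5797, 80200, [2, 3, 2, 2]),
    (5797, 178305, [2, 3]), (5797, 50730, [2, 3, 2, 2, 2]), (5797, 18005, [2, 3, 2])]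

/-! ### The search procedure -/

/-- Evaluate a number before continuing. -/
def force (n : ℕ) (k : ℕ → Bool) : Bool :=
  match n with
  | 0 => k 0
  | m + 1 => k (m + 1)

lemma force_eq (n : ℕ) (k : ℕ → Bool) : force n k = k n := by
  cases n <;> rfl

/-- Lookup in a table. -/
def look : List (ℕ × ℕ) → ℕ → ℕ
  | [], _ => 0
  | (y, s) :: l, x => cond (Nat.beq x y) s (look l x)

/-- Lookup of a word. -/
def lookW : List (ℕ × ℕ × List ℕ) → ℕ → ℕ → List ℕ
  | [], _, _ => []
  | (y, z, w) :: l, c, d => cond (Nat.beq c y && Nat.beq d z) w (lookW l c d)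

/-- Run a braid word on a tuple of codes. -/
def run (k : ℕ → ℕ → ℕ → ℕ → ℕ → Bool) : List ℕ → ℕ → ℕ → ℕ → ℕ → ℕ → Bool
  | [], a, b, c, d, e => k a b c d e
  | 0 :: w, a, b, c, d, e => force (cj b a) fun x => run k w b x c d e
  | 1 :: w, a, b, c, d, e => force (cj c b) fun x => run k w a c x d e
  | 2 :: w, a, b, c, d, e => force (cj d c) fun x => run k w a b d x e
  | _ :: w, a, b, c, d, e => force (cj e d) fun x => run k w a b c e x

/-- Conjugate the tuple so that it starts with the standard pair. -/
def norm5 (k : ℕ → ℕ → ℕ → ℕ → ℕ → Bool) (a b c d e : ℕ) : Bool :=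
  force (look conjA a) fun s => force (look conjB (cj s b)) fun t =>
  force (mulc s t) fun u => force (cj u b) fun b' =>
    Nat.beq b' 178256 && (valid u && force (cj u a) fun a' => force (cj u c) fun c' =>
    force (cj u d) fun d' => force (cj u e) fun e' => k a' b' c' d' e')

/-- Is this the base tuple? -/
def isBase (a b c d e : ℕ) : Bool :=
  Nat.beq a 181441 && Nat.beq b 178256 && Nat.beq c 178305 && Nat.beq d 50730 && Nat.beq e 50408

/-- Second stage. -/
def stageC (a b c d e : ℕ) : Bool := run (norm5 isBase) (lookW wordC c d) a b c d e

/-- First stage followed by the second. -/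
def stageB (a b c d e : ℕ) : Bool := wordB.any fun w => run (norm5 stageC) w a b c d e

/-- The check for one tuple. -/
def test (b mb c mc ab d md : ℕ) : Bool :=
  force (mulc ab (mulc c d)) fun m =>
    Nat.beq m 181896 || !Nat.beq (mulc m m) 181896 ||
    !Nat.beq (Nat.land (Nat.land mb mc) md) 0 || stageB 181441 b c d m

/-- All tuples are fine; the first mask is that of `(0 1)(2 3)`. -/
def checkAll (am : ℕ) : Bool :=
  repTab.all fun b => force (mulc 181441 b.1) fun ab => force (Nat.land am b.2) fun mb =>
    invTab.all fun c => invTab.all fun d => test b.1 mb c.1 c.2 ab d.1 d.2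

set_option maxRecDepth 100000 in
lemma checkAll_true : checkAll 211931019412080 = true := by decide +kernel


/-! ### Soundness of the search -/

/-- A test on codes, applied to a tuple of permutations. -/
def onCodes (k : ℕ → ℕ → ℕ → ℕ → ℕ → Bool) (g : Fin 5 → Perm (Fin 6)) : Bool :=
  k (code (g 0)) (code (g 1)) (code (g 2)) (code (g 3)) (code (g 4))

lemma move_zero (g : Fin 5 → Perm (Fin 6)) :
    AbsRel 5 g ![g 1, (g 1)⁻¹ * g 0 * g 1, g 2, g 3, g 4] := by
  refine Or.inl ⟨0, by norm_num, rfl, rfl, ?_⟩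
  intro j h1 h2
  fin_cases j <;> first | rfl | exact absurd rfl h1 | exact absurd rfl h2

lemma move_one (g : Fin 5 → Perm (Fin 6)) :
    AbsRel 5 g ![g 0, g 2, (g 2)⁻¹ * g 1 * g 2, g 3, g 4] := by
  refine Or.inl ⟨1, by norm_num, rfl, rfl, ?_⟩
  intro j h1 h2
  fin_cases j <;> first | rfl | exact absurd rfl h1 | exact absurd rfl h2

lemma move_two (g : Fin 5 → Perm (Fin 6)) :
    AbsRel 5 g ![g 0, g 1, g 3, (g 3)⁻¹ * g 2 * g 3, g 4] := by
  refine Or.inl ⟨2, by norm_num, rfl, rfl, ?_⟩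
  intro j h1 h2
  fin_cases j <;> first | rfl | exact absurd rfl h1 | exact absurd rfl h2

lemma move_three (g : Fin 5 → Perm (Fin 6)) :
    AbsRel 5 g ![g 0, g 1, g 2, g 4, (g 4)⁻¹ * g 3 * g 4] := by
  refine Or.inl ⟨3, by norm_num, rfl, rfl, ?_⟩
  intro j h1 h2
  fin_cases j <;> first | rfl | exact absurd rfl h1 | exact absurd rfl h2

lemma run_sound (k : ℕ → ℕ → ℕ → ℕ → ℕ → Bool) (w : List ℕ) :
    ∀ g : Fin 5 → Perm (Fin 6), onCodes (run k w) g = true →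
      ∃ h, Relation.EqvGen (AbsRel 5) g h ∧ onCodes k h = true := by
  induction w with
  | nil => exact fun g hg => ⟨g, .refl g, hg⟩
  | cons i w ih =>
    intro g hg
    have step : ∀ g', AbsRel 5 g g' → onCodes (run k w) g' = true →
        ∃ h, Relation.EqvGen (AbsRel 5) g h ∧ onCodes k h = true := by
      intro g' hr hk
      obtain ⟨h, h1, h2⟩ := ih g' hk
      exact ⟨h, .trans _ _ _ (.rel _ _ hr) h1, h2⟩
    match i, hg with
    | 0, hg =>
      refine step _ (move_zero g) ?_
      simpa [onCodes, run, force_eq, code_conj] using hg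
    | 1, hg =>
      refine step _ (move_one g) ?_
      simpa [onCodes, run, force_eq, code_conj] using hg
    | 2, hg =>
      refine step _ (move_two g) ?_
      simpa [onCodes, run, force_eq, code_conj] using hg
    | n + 3, hg =>
      refine step _ (move_three g) ?_
      simpa [onCodes, run, force_eq, code_conj] using hg

lemma norm5_sound (k : ℕ → ℕ → ℕ → ℕ → ℕ → Bool) (g : Fin 5 → Perm (Fin 6))
    (hg : onCodes (norm5 k) g = true) :
    ∃ h, Relation.EqvGen (AbsRel 5) g h ∧ onCodes k h = true := by
  simp only [onCodes, norm5, force_eq, Bool.and_eq_true] at hg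
  obtain ⟨-, hv, hk⟩ := hg
  obtain ⟨s, hs⟩ := exists_of_valid hv
  refine ⟨fun i => s⁻¹ * g i * s, .rel _ _ (Or.inr ⟨s, rfl⟩), ?_⟩
  simp only [onCodes, code_conj, hs]
  exact hk

lemma run_norm5_sound (k : ℕ → ℕ → ℕ → ℕ → ℕ → Bool) (w : List ℕ)
    (g : Fin 5 → Perm (Fin 6)) (hg : onCodes (run (norm5 k) w) g = true) :
    ∃ h, Relation.EqvGen (AbsRel 5) g h ∧ onCodes k h = true := by
  obtain ⟨h, h1, h2⟩ := run_sound _ _ _ hg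
  obtain ⟨h', h3, h4⟩ := norm5_sound _ _ h2
  exact ⟨h', .trans _ _ _ h1 h3, h4⟩

lemma stageC_sound (g : Fin 5 → Perm (Fin 6)) (hg : onCodes stageC g = true) :
    ∃ h, Relation.EqvGen (AbsRel 5) g h ∧ onCodes isBase h = true :=
  run_norm5_sound isBase (lookW wordC (code (g 2)) (code (g 3))) g hg

lemma stageB_sound (g : Fin 5 → Perm (Fin 6)) (hg : onCodes stageB g = true) :
    ∃ h, Relation.EqvGen (AbsRel 5) g h ∧ onCodes isBase h = true := by
  simp only [onCodes, stageB, List.any_eq_true] at hg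
  obtain ⟨w, -, hw⟩ := hg
  obtain ⟨h, h1, h2⟩ := run_norm5_sound stageC w g hw
  obtain ⟨h', h3, h4⟩ := stageC_sound h h2
  exact ⟨h', .trans _ _ _ h1 h3, h4⟩

/-! ### The base tuple -/

/-- The base tuple. -/
def baseT : Fin 5 → Perm (Fin 6) :=
  ![swap 0 1 * swap 2 3, swap 1 2 * swap 3 4, swap 0 1 * swap 3 4, swap 0 2 * swap 1 5,
    swap 1 5 * swap 2 3]

lemma baseT_codes : code (baseT 0) = 181441 ∧ code (baseT 1) = 178256 ∧
    code (baseT 2) = 178305 ∧ code (baseT 3) = 50730 ∧ code (baseT 4) = 50408 := by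
  decide +kernel

lemma eq_baseT (h : Fin 5 → Perm (Fin 6)) (hh : onCodes isBase h = true) : h = baseT := by
  simp only [onCodes, isBase, Bool.and_eq_true, Nat.beq_eq] at hh
  obtain ⟨⟨⟨⟨h0, h1⟩, h2⟩, h3⟩, h4⟩ := hh
  obtain ⟨b0, b1, b2, b3, b4⟩ := baseT_codes
  have : ∀ i, code (h i) = code (baseT i) := by
    rw [Fin.forall_fin_succ, Fin.forall_fin_succ, Fin.forall_fin_succ, Fin.forall_fin_succ,
      Fin.forall_fin_one]
    exact ⟨h0.trans b0.symm, h1.trans b1.symm, h2.trans b2.symm, h3.trans b3.symm,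
      h4.trans b4.symm⟩
  exact funext fun i => code_inj (this i)

/-- Words in the base tuple whose values carry `(0, 1)` to every pair of distinct letters. -/
def pairWords : List (List (Fin 5)) := [
    [], [0], [1], [3], [4], [0, 1], [0, 3], [0, 4], [1, 0], [2, 1], [3, 0], [3, 4], [4, 0],
    [4, 1], [4, 3], [0, 3, 0], [0, 3, 4], [0, 4, 0], [1, 0, 1], [1, 0, 3], [1, 4, 1],
    [1, 4, 3], [2, 4, 1], [2, 4, 3], [3, 4, 1], [0, 1, 0, 1], [0, 1, 4, 3], [0, 2, 4, 3],
    [0, 3, 4, 1], [1, 0, 3, 0]]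

lemma pairWords_spec : ∀ c d : Fin 6, c ≠ d → ∃ w ∈ pairWords,
    (w.map baseT).prod 0 = c ∧ (w.map baseT).prod 1 = d := by
  decide +kernel

lemma word_mem (w : List (Fin 5)) :
    (w.map baseT).prod ∈ Subgroup.closure (Set.range baseT) := by
  apply Subgroup.list_prod_mem
  intro x hx
  obtain ⟨i, -, rfl⟩ := List.mem_map.mp hx
  exact Subgroup.subset_closure ⟨i, rfl⟩

lemma baseT_even : ∀ i, baseT i ∈ alternatingGroup (Fin 6) := by
  intro i
  rw [Equiv.Perm.mem_alternatingGroup]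
  revert i
  decide +kernel

lemma baseT_closure : Subgroup.closure (Set.range baseT) = alternatingGroup (Fin 6) := by
  apply le_antisymm
  · rw [Subgroup.closure_le]
    rintro _ ⟨i, rfl⟩
    exact baseT_even i
  · have h2 : MulAction.IsMultiplyPretransitive
        (Subgroup.closure (Set.range baseT)) (Fin 6) 2 := by
      rw [MulAction.is_two_pretransitive_iff]
      intro a b c d hab hcd
      obtain ⟨v, -, hv0, hv1⟩ := pairWords_spec a b hab
      obtain ⟨w, -, hw0, hw1⟩ := pairWords_spec c d hcd
      refine ⟨⟨(w.map baseT).prod, word_mem w⟩ * ⟨(v.map baseT).prod, word_mem v⟩⁻¹, ?_, ?_⟩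
      · rw [mul_smul, ← hw0, ← hv0]
        exact congrArg _ (Equiv.symm_apply_apply (List.prod _) _)
      · rw [mul_smul, ← hw1, ← hv1]
        exact congrArg _ (Equiv.symm_apply_apply (List.prod _) _)
    refine Equiv.Perm.alternatingGroup_le_of_isPreprimitive_of_isThreeCycle_mem
      (MulAction.isPreprimitive_of_is_two_pretransitive h2)
      (g := swap 2 4 * swap 2 3) ?_ ?_
    · exact Equiv.Perm.isThreeCycle_swap_mul_swap_same (by decide) (by decide) (by decide)
    · have : swap 2 4 * swap 2 3 = (([0, 2] : List (Fin 5)).map baseT).prod := by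
        decide +kernel
      rw [this]
      exact word_mem _

lemma baseT_mem : baseT ∈ NielsenSet 5 := by
  refine ⟨baseT_even, ?_, ?_, baseT_closure⟩
  · intro i
    apply orderOf_eq_prime
    · revert i; decide +kernel
    · revert i; decide +kernel
  · decide +kernel

/-! ### Generation -/

/-- The stabilizer of a set of codes under conjugation. -/
def stab (U : List ℕ) : Subgroup (Perm (Fin 6)) where
  carrier := {p | ∀ u, code u ∈ U ↔ code (p⁻¹ * u * p) ∈ U}
  one_mem' := by simp
  mul_mem' := by
    intro p q hp hq u
    rw [hp u, hq]
    simp [mul_assoc]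
  inv_mem' := by
    intro p hp u
    rw [hp (p⁻¹⁻¹ * u * p⁻¹)]
    simp [mul_assoc]

/-- Does the conjugation by `x` preserve `U`? -/
def pres (x : ℕ) (U : List ℕ) : Bool := U.all fun u => U.any fun v => Nat.beq (cj x u) v

/-- The masks are correct. -/
def maskOK : Bool := invTab.all fun x => Nat.blt x.2 (Nat.pow 2 52) &&
  structTab.zipIdx.all fun U => !Nat.testBit x.2 U.2 || pres x.1 U.1

/-- Every structure is moved by some entry of the base tuple. -/
def propOK : Bool := structTab.all fun U =>
  [181441, 178256, 178305, 50730, 50408].any fun x => !pres x U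

lemma maskOK_true : maskOK = true := by decide +kernel

lemma propOK_true : propOK = true := by decide +kernel

lemma pres_iff (x : ℕ) (U : List ℕ) : pres x U = true ↔ ∀ u ∈ U, cj x u ∈ U := by
  simp [pres, List.all_eq_true, List.any_eq_true]

lemma mem_stab {p : Perm (Fin 6)} (hp : p * p = 1) {U : List ℕ}
    (h : pres (code p) U = true) : p ∈ stab U := by
  rw [pres_iff] at h
  have hp' : p⁻¹ = p := inv_eq_of_mul_eq_one_left hp
  intro u
  constructor
  · intro hu
    rw [code_conj]
    exact h _ hu
  · intro hu
    have := h _ hu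
    rw [← code_conj, hp'] at this
    have e : p * (p * u * p) * p = u := by
      calc p * (p * u * p) * p = (p * p) * u * (p * p) := by group
        _ = u := by rw [hp]; simp
    rwa [e] at this

lemma structTab_valid : (structTab.all fun U => U.all valid) = true := by decide +kernel

lemma not_le_stab {U : List ℕ} (hU : U ∈ structTab) : ¬ alternatingGroup (Fin 6) ≤ stab U := by
  intro hle
  have h1 := List.all_eq_true.mp propOK_true U hU
  have hv := List.all_eq_true.mp structTab_valid U hU
  rw [List.all_eq_true] at hv
  have key : ∀ i, pres (code (baseT i)) U = true := by
    intro i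
    rw [pres_iff]
    intro u hu
    obtain ⟨p, rfl⟩ := exists_of_valid (hv u hu)
    rw [← code_conj]
    exact (hle (baseT_even i) p).mp hu
  obtain ⟨b0, b1, b2, b3, b4⟩ := baseT_codes
  have k0 := key 0
  have k1 := key 1
  have k2 := key 2
  have k3 := key 3
  have k4 := key 4
  rw [b0] at k0
  rw [b1] at k1
  rw [b2] at k2
  rw [b3] at k3
  rw [b4] at k4
  simp [k0, k1, k2, k3, k4] at h1

lemma mask_sound {x m k : ℕ} (hx : (x, m) ∈ invTab) (hk : m.testBit k = true) :
    ∃ U ∈ structTab, structTab[k]? = some U ∧ pres x U = true := by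
  have h := List.all_eq_true.mp maskOK_true _ hx
  simp only [Bool.and_eq_true, Nat.blt_eq, List.all_eq_true] at h
  obtain ⟨h1, h2⟩ := h
  have hk52 : k < structTab.length := by
    by_contra hc
    have hlen : structTab.length = 52 := by decide +kernel
    rw [hlen, not_lt] at hc
    have : m < 2 ^ k := lt_of_lt_of_le h1 (Nat.pow_le_pow_right (by norm_num) hc)
    rw [Nat.testBit_lt_two_pow this] at hk
    exact Bool.noConfusion hk
  refine ⟨structTab[k], List.getElem_mem hk52, List.getElem?_eq_getElem hk52, ?_⟩
  have := h2 (structTab[k], k) (List.mem_zipIdx_iff_getElem?.mpr (List.getElem?_eq_getElem hk52))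
  simpa [hk] using this

/-! ### Double transpositions -/

lemma invol_mem (p : Perm (Fin 6)) : p * p = 1 → p ≠ 1 → Perm.sign p = 1 →
    code p ∈ invTab.map Prod.fst := by
  revert p
  decide +kernel

/-- The tables `conjA` and `conjB` do what they should. -/
def conjOK : Bool := invTab.all fun x =>
  valid (look conjA x.1) && Nat.beq (cj (look conjA x.1) x.1) 181441 &&
  valid (look conjB x.1) && Nat.beq (cj (look conjB x.1) 181441) 181441 &&
  (repTab.map Prod.fst).any (Nat.beq (cj (look conjB x.1) x.1))

lemma conjOK_true : conjOK = true := by decide +kernel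

lemma repTab_sub : (repTab.all fun x => invTab.any fun y => Nat.beq x.1 y.1 && Nat.beq x.2 y.2)
    = true := by decide +kernel

lemma first_mem : (181441, 211931019412080) ∈ invTab := by decide +kernel

/-- The property of tuples used in the argument. -/
structure Good (g : Fin 5 → Perm (Fin 6)) : Prop where
  sq : ∀ i, g i * g i = 1
  ne : ∀ i, g i ≠ 1
  even : ∀ i, Perm.sign (g i) = 1
  prod : g 0 * g 1 * g 2 * g 3 * g 4 = 1
  gen : ∀ K : Subgroup (Perm (Fin 6)), (∀ i, g i ∈ K) → alternatingGroup (Fin 6) ≤ K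

lemma good_of_mem {g : Fin 5 → Perm (Fin 6)} (hg : g ∈ NielsenSet 5) : Good g := by
  obtain ⟨h1, h2, h3, h4⟩ := hg
  refine ⟨fun i => ?_, fun i hi => ?_, fun i => ?_, ?_, fun K hK => ?_⟩
  · rw [← sq, ← h2 i, pow_orderOf_eq_one]
  · have := h2 i
    rw [hi, orderOf_one] at this
    omega
  · exact Equiv.Perm.mem_alternatingGroup.mp (h1 i)
  · simpa [List.ofFn_succ, mul_assoc] using h3
  · rw [← h4, Subgroup.closure_le]
    rintro _ ⟨i, rfl⟩
    exact hK i

lemma Good.conj {g : Fin 5 → Perm (Fin 6)} (hg : Good g) (s : Perm (Fin 6)) :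
    Good fun i => s⁻¹ * g i * s := by
  refine ⟨fun i => ?_, fun i hi => hg.ne i ?_, fun i => ?_, ?_, fun K hK x hx => ?_⟩
  · calc s⁻¹ * g i * s * (s⁻¹ * g i * s) = s⁻¹ * (g i * g i) * s := by group
      _ = 1 := by rw [hg.sq]; group
  · calc g i = s * (s⁻¹ * g i * s) * s⁻¹ := by group
      _ = 1 := by rw [hi]; group
  · simp [hg.even i]
  · calc s⁻¹ * g 0 * s * (s⁻¹ * g 1 * s) * (s⁻¹ * g 2 * s) * (s⁻¹ * g 3 * s) *
          (s⁻¹ * g 4 * s) = s⁻¹ * (g 0 * g 1 * g 2 * g 3 * g 4) * s := by group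
      _ = 1 := by rw [hg.prod]; group
  · have h := hg.gen (K.comap (MulAut.conj s⁻¹).toMonoidHom) (fun i => by
      simpa using hK i)
    have hx' : s * x * s⁻¹ ∈ alternatingGroup (Fin 6) := by
      rw [Equiv.Perm.mem_alternatingGroup] at hx ⊢
      simp [hx]
    have := h hx'
    have e : s⁻¹ * (s * x * s⁻¹) * s = x := by group
    simpa [mul_assoc] using this

lemma Good.mem {g : Fin 5 → Perm (Fin 6)} (hg : Good g) (i : Fin 5) :
    ∃ m, (code (g i), m) ∈ invTab := by
  obtain ⟨⟨x, m⟩, h1, h2⟩ := List.mem_map.mp (invol_mem (g i) (hg.sq i) (hg.ne i) (hg.even i))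
  exact ⟨m, by rw [← h2]; exact h1⟩

lemma conj_spec {x m : ℕ} (hx : (x, m) ∈ invTab) :
    (∃ s : Perm (Fin 6), cj (code s) x = 181441) ∧
    (∃ s : Perm (Fin 6), cj (code s) 181441 = 181441 ∧
      ∃ m', (cj (code s) x, m') ∈ repTab) := by
  have h := List.all_eq_true.mp conjOK_true _ hx
  simp only [Bool.and_eq_true, Nat.beq_eq, List.any_eq_true] at h
  obtain ⟨⟨⟨⟨h1, h2⟩, h3⟩, h4⟩, y, h5, h6⟩ := h
  obtain ⟨s, hs⟩ := exists_of_valid h1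
  obtain ⟨t, ht⟩ := exists_of_valid h3
  refine ⟨⟨s, by rw [hs]; exact h2⟩, ⟨t, by rw [ht]; exact h4, ?_⟩⟩
  obtain ⟨⟨z, m'⟩, h7, h8⟩ := List.mem_map.mp h5
  refine ⟨m', ?_⟩
  rw [ht, h6, ← h8]
  exact h7

lemma reach_of_normal {g : Fin 5 → Perm (Fin 6)} (hg : Good g) (ha : code (g 0) = 181441)
    {mb : ℕ} (hb : (code (g 1), mb) ∈ repTab) : Relation.EqvGen (AbsRel 5) g baseT := by
  obtain ⟨mc, hc⟩ := hg.mem 2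
  obtain ⟨md, hd⟩ := hg.mem 3
  have h := checkAll_true
  simp only [checkAll, force_eq] at h
  have h := List.all_eq_true.mp h _ hb
  have h := List.all_eq_true.mp h _ hc
  have h := List.all_eq_true.mp h _ hd
  have he : g 0 * g 1 * (g 2 * g 3) = g 4 := by
    have h1 := hg.prod
    have h2 := hg.sq 4
    calc g 0 * g 1 * (g 2 * g 3) = (g 0 * g 1 * g 2 * g 3 * g 4) * (g 4)⁻¹ := by group
      _ = (g 4)⁻¹ := by rw [h1, one_mul]
      _ = g 4 := inv_eq_of_mul_eq_one_left h2
  have hm : mulc (mulc 181441 (code (g 1))) (mulc (code (g 2)) (code (g 3))) = code (g 4) := by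
    rw [← ha, ← code_mul, ← code_mul, ← code_mul, he]
  simp only [test, force_eq, hm, Bool.or_eq_true, Nat.beq_eq, Bool.not_eq_true'] at h
  rcases h with ((h | h) | h) | h
  · exact absurd (code_inj (h.trans code_one.symm)) (hg.ne 4)
  · rw [← code_mul, hg.sq, code_one] at h
    exact absurd h (by decide)
  · exfalso
    have hne : Nat.land (Nat.land (Nat.land 211931019412080 mb) mc) md ≠ 0 := by
      intro h0
      rw [h0] at h
      exact Bool.noConfusion h
    obtain ⟨k, hk⟩ := Nat.exists_testBit_of_ne_zero hne
    change (((211931019412080 &&& mb) &&& mc) &&& md).testBit k = true at hk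
    simp only [Nat.testBit_land, Bool.and_eq_true] at hk
    obtain ⟨⟨⟨ka, kb⟩, kc⟩, kd⟩ := hk
    have hb' : (code (g 1), mb) ∈ invTab := by
      have := List.all_eq_true.mp repTab_sub _ hb
      simp only [List.any_eq_true, Bool.and_eq_true, Nat.beq_eq] at this
      obtain ⟨⟨y, m⟩, h1, h2, h3⟩ := this
      simp only at h2 h3
      rw [h2, h3]
      exact h1
    obtain ⟨U, hU, hUk, p0⟩ := mask_sound first_mem ka
    obtain ⟨U1, -, hU1, p1⟩ := mask_sound hb' kb
    obtain ⟨U2, -, hU2, p2⟩ := mask_sound hc kc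
    obtain ⟨U3, -, hU3, p3⟩ := mask_sound hd kd
    rw [hUk, Option.some_inj] at hU1 hU2 hU3
    subst hU1 hU2 hU3
    rw [← ha] at p0
    have s0 := mem_stab (hg.sq 0) p0
    have s1 := mem_stab (hg.sq 1) p1
    have s2 := mem_stab (hg.sq 2) p2
    have s3 := mem_stab (hg.sq 3) p3
    have s4 : g 4 ∈ stab U := he ▸ mul_mem (mul_mem s0 s1) (mul_mem s2 s3)
    refine not_le_stab hU (hg.gen _ ?_)
    intro i
    fin_cases i
    exacts [s0, s1, s2, s3, s4]
  · obtain ⟨h', h1, h2⟩ := stageB_sound g (by rw [onCodes, ha]; exact h)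
    rw [eq_baseT h' h2] at h1
    exact h1

lemma reach {g : Fin 5 → Perm (Fin 6)} (hg : Good g) : Relation.EqvGen (AbsRel 5) g baseT := by
  obtain ⟨m, hm⟩ := hg.mem 0
  obtain ⟨s, hs⟩ := (conj_spec hm).1
  have hg1 := hg.conj s
  obtain ⟨m1, hm1⟩ := hg1.mem 1
  obtain ⟨t, ht, m', hm'⟩ := (conj_spec hm1).2
  have hg2 := hg1.conj t
  refine .trans _ _ _ (.rel _ _ (Or.inr ⟨s, rfl⟩)) (.trans _ _ _ (.rel _ _ (Or.inr ⟨t, rfl⟩))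
    (reach_of_normal hg2 (mb := m') ?_ ?_))
  · simp only [code_conj] at hs ⊢
    rw [hs, ht]
  · rw [code_conj]
    exact hm'

end A6Proof

/-- `Ni(A₆, C_{2×2}^5)` is nonempty and any two of its elements are related by
the equivalence relation generated by Hurwitz moves and simultaneous
`S₆`-conjugation; the corresponding quotient has exactly one class. -/
theorem stmt_1 :
    (NielsenSet 5).Nonempty ∧
    (∀ g ∈ NielsenSet 5, ∀ h ∈ NielsenSet 5, Relation.EqvGen (AbsRel 5) g h) ∧
    Nat.card (Quotient ((Relation.EqvGen.setoid (AbsRel 5)).comap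
      (Subtype.val : ↥(NielsenSet 5) → (Fin 5 → Equiv.Perm (Fin 6))))) = 1 := by
  have key : ∀ g ∈ NielsenSet 5, ∀ h ∈ NielsenSet 5, Relation.EqvGen (AbsRel 5) g h :=
    fun g hg h hh => .trans _ _ _ (A6Proof.reach (A6Proof.good_of_mem hg))
      (.symm _ _ (A6Proof.reach (A6Proof.good_of_mem hh)))
  refine ⟨⟨_, A6Proof.baseT_mem⟩, key, ?_⟩
  rw [Nat.card_eq_one_iff_unique]
  refine ⟨⟨fun x y => ?_⟩, ⟨Quotient.mk _ ⟨_, A6Proof.baseT_mem⟩⟩⟩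
  induction x using Quotient.inductionOn with | _ x => ?_
  induction y using Quotient.inductionOn with | _ y => ?_
  exact Quotient.sound (key _ x.2 _ y.2)
end

section
/- Let k > 5 and let (g_1,…,g_k) and (h_1,…,h_k) be elements of the Nielsen class Ni(A6, C_{2×2}^k) such that g_1 ≠ g_2, Fix(g_1) = Fix(g_2), h_1 ≠ h_2, and Fix(h_1) = Fix(h_2) (so that both tuples admit a 1-reduction in their first two entries). If the reduced (k−1)-tuples (g_1 g_2, g_3,…,g_k) and (h_1 h_2, h_3,…,h_k) are Hurwitz-equivalent, then (g_1,…,g_k) and (h_1,…,h_k) are Hurwitz-equivalent. -/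
/-- Even permutations of order two: the products of two disjoint transpositions. -/
def CC (p : Equiv.Perm (Fin 6)) : Prop := p * p = 1 ∧ p ≠ 1 ∧ Equiv.Perm.sign p = 1

/-- Numerical code of a permutation (base eight digits). -/
def encP (p : Equiv.Perm (Fin 6)) : ℕ :=
  (p 0).val + 8 * (p 1).val + 64 * (p 2).val + 512 * (p 3).val + 4096 * (p 4).val
    + 32768 * (p 5).val

def appN (n i : ℕ) : ℕ := n / 8 ^ i % 8

def mulN (n m : ℕ) : ℕ :=
  appN n (appN m 0) + 8 * appN n (appN m 1) + 64 * appN n (appN m 2) + 512 * appN n (appN m 3)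
    + 4096 * appN n (appN m 4) + 32768 * appN n (appN m 5)

theorem appN_enc (p : Equiv.Perm (Fin 6)) (i : Fin 6) : appN (encP p) i.val = (p i).val := by
  have h0 := (p 0).isLt
  have h1 := (p 1).isLt
  have h2 := (p 2).isLt
  have h3 := (p 3).isLt
  have h4 := (p 4).isLt
  have h5 := (p 5).isLt
  unfold appN encP
  fin_cases i <;> simp only [Fin.zero_eta, Fin.mk_one, Fin.reduceFinMk] <;> norm_num <;> omega

theorem enc_mul (p q : Equiv.Perm (Fin 6)) : encP (p * q) = mulN (encP p) (encP q) := by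
  have h : ∀ i : Fin 6, appN (encP p) (appN (encP q) i.val) = (p (q i)).val := by
    intro i
    rw [appN_enc, appN_enc]
  have h0 := h 0
  have h1 := h 1
  have h2 := h 2
  have h3 := h 3
  have h4 := h 4
  have h5 := h 5
  simp only [Fin.val_zero, Fin.val_one, Fin.val_two] at h0 h1 h2
  have e3 : ((3 : Fin 6) : ℕ) = 3 := rfl
  have e4 : ((4 : Fin 6) : ℕ) = 4 := rfl
  have e5 : ((5 : Fin 6) : ℕ) = 5 := rfl
  have e2 : ((2 : Fin 6) : ℕ) = 2 := rfl
  rw [e3] at h3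
  rw [e4] at h4
  rw [e5] at h5
  unfold mulN
  rw [h0, h1, h2, h3, h4, h5]
  rfl

theorem enc_inj {p q : Equiv.Perm (Fin 6)} (h : encP p = encP q) : p = q := by
  ext i
  rw [← appN_enc, ← appN_enc, h]

/-- Codes of the 45 involutions of `A₆`. -/
def invL : List ℕ := [152776, 109320, 80200, 153168, 178256, 117328, 152216, 172824, 82776, 105120, 169184, 71520, 47272, 50408, 42792, 153217, 178305, 117377, 181441, 173825, 83777, 153098, 178186, 117258, 180762, 169506, 50730, 151691, 172299, 82251, 180307, 168099, 49323, 101004, 165068, 67404, 165460, 164508, 34476, 14477, 17613, 9997, 18005, 17053, 5797]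

theorem mem_invL : ∀ p : Equiv.Perm (Fin 6), p * p = 1 → p ≠ 1 → Equiv.Perm.sign p = 1 →
    encP p ∈ invL := by
  decide +kernel

/-- Evaluate the argument before passing it on. -/
def forceN {α : Type} (n : ℕ) (f : ℕ → α) : α := Nat.casesOn n (f 0) (fun k => f (k + 1))

theorem forceN_eq {α : Type} (n : ℕ) (f : ℕ → α) : forceN n f = f n := by
  cases n <;> rfl

def mulF {α : Type} (n m : ℕ) (f : ℕ → α) : α := forceN (mulN n m) f

theorem mulF_eq {α : Type} (n m : ℕ) (f : ℕ → α) : mulF n m f = f (mulN n m) := forceN_eq _ _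

/-- Conjugation of `a` by the involution `b`. -/
def conjF {α : Type} (a b : ℕ) (f : ℕ → α) : α := mulF b a fun c => mulF c b f

theorem conjF_eq {α : Type} (a b : ℕ) (f : ℕ → α) :
    conjF a b f = f (mulN (mulN b a) b) := by
  rw [conjF, mulF_eq, mulF_eq]

def comN (a b : ℕ) : Bool := Nat.beq (mulN a b) (mulN b a)

/-- code of the identity -/
def oneN : ℕ := 181896

/-- the product of the two involutions has order 1, 3 or 5 -/
def oddN (a b : ℕ) : Bool :=
  mulF a b fun c => mulF c c fun c2 => mulF c2 c fun c3 =>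
    Nat.beq c3 oneN || Nat.beq (mulN c3 c2) oneN

def fixN (a b : ℕ) : Bool :=
  [0, 1, 2, 3, 4, 5].all fun i => (Nat.beq (appN a i) i) == (Nat.beq (appN b i) i)

def cenN (s x : ℕ) : Bool := invL.all fun v => !(fixN v s) || comN x v

def solved3 (t s a : ℕ) : Bool :=
  conjF s a fun x => oddN t x || conjF x s fun y => conjF y a fun z => oddN t z

def solved4 (t s a b : ℕ) : Bool :=
  solved3 t s a || solved3 t s b ||
    conjF s a fun x => conjF x b fun y => oddN t y || conjF y a fun z => oddN t z

def xList : List ℕ := [153224, 152769]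

def yList : List ℕ := [181448, 181889, 152090, 151635]

def tN : ℕ := 181441

def checkAll : Bool :=
  invL.all fun s => oddN tN s || xList.any fun x =>
    comN x tN && (comN x s && (cenN tN x && invL.all fun a => comN x a || (solved3 tN s a ||
      yList.any fun y => comN y tN && (comN y s && (comN y a && ((cenN tN y || cenN s y) &&
        invL.all fun b => comN y b || solved4 tN s a b))))))

theorem checkAll_true : checkAll = true := by decide +kernel

def checkPair : Bool :=
  invL.all fun u => invL.all fun v => !(fixN u v) || (Nat.beq u v ||
    (comN u v && fixN u (mulN u v)))

theorem checkPair_true : checkPair = true := by decide +kernel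

def checkUniq : Bool :=
  invL.all fun a => invL.all fun u => !(fixN u a) || (Nat.beq u a ||
    invL.all fun w => !(fixN w a) || (Nat.beq w a || (Nat.beq w u || Nat.beq w (mulN u a))))

theorem checkUniq_true : checkUniq = true := by decide +kernel

/-! ### Hurwitz moves on lists -/

/-- A Hurwitz move on lists with respect to a conjugation operation `c`. -/
inductive Mv {α : Type} (c : α → α → α) : List α → List α → Prop
  | mk (A : List α) (a b : α) (B : List α) : Mv c (A ++ a :: b :: B) (A ++ b :: c a b :: B)

def Heq {α : Type} (c : α → α → α) (L L' : List α) : Prop := Relation.EqvGen (Mv c) L L'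

namespace Heq

variable {α β : Type} {c : α → α → α} {d : β → β → β}

theorem rfl' (L : List α) : Heq c L L := Relation.EqvGen.refl L

theorem symm' {L M : List α} (h : Heq c L M) : Heq c M L := Relation.EqvGen.symm _ _ h

theorem trans' {L M N : List α} (h : Heq c L M) (k : Heq c M N) : Heq c L N :=
  Relation.EqvGen.trans _ _ _ h k

/-- Induction principle: transport along a map on lists respecting moves. -/
theorem lift (F : List α → List β) (hF : ∀ L M, Mv c L M → Heq d (F L) (F M))
    {L M : List α} (h : Heq c L M) : Heq d (F L) (F M) := by
  induction h with
  | rel x y h => exact hF x y h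
  | refl x => exact rfl' _
  | symm x y _ ih => exact symm' ih
  | trans x y z _ _ ih1 ih2 => exact trans' ih1 ih2

theorem inv_iff (P : List α → Prop) (hP : ∀ L M, Mv c L M → (P L ↔ P M))
    {L M : List α} (h : Heq c L M) : P L ↔ P M := by
  induction h with
  | rel x y h => exact hP x y h
  | refl x => exact Iff.rfl
  | symm x y _ ih => exact ih.symm
  | trans x y z _ _ ih1 ih2 => exact ih1.trans ih2

theorem append_left (A : List α) {L M : List α} (h : Heq c L M) : Heq c (A ++ L) (A ++ M) := by
  refine lift (fun L => A ++ L) ?_ h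
  rintro _ _ ⟨A', a, b, B⟩
  have := Mv.mk (c := c) (A ++ A') a b B
  rw [List.append_assoc, List.append_assoc] at this
  exact Relation.EqvGen.rel _ _ this

theorem append_right (A : List α) {L M : List α} (h : Heq c L M) : Heq c (L ++ A) (M ++ A) := by
  refine lift (fun L => L ++ A) ?_ h
  rintro _ _ ⟨A', a, b, B⟩
  have := Mv.mk (c := c) A' a b (B ++ A)
  refine Relation.EqvGen.rel _ _ ?_
  simpa using this

theorem append {L M L' M' : List α} (h : Heq c L M) (h' : Heq c L' M') :
    Heq c (L ++ L') (M ++ M') := (append_right _ h).trans' (append_left _ h')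

theorem cons (a : α) {L M : List α} (h : Heq c L M) : Heq c (a :: L) (a :: M) :=
  append_left [a] h

theorem map (f : α → β) (hf : ∀ a b, f (c a b) = d (f a) (f b)) {L M : List α}
    (h : Heq c L M) : Heq d (L.map f) (M.map f) := by
  refine lift (fun L => L.map f) ?_ h
  rintro _ _ ⟨A', a, b, B⟩
  have := Mv.mk (c := d) (A'.map f) (f a) (f b) (B.map f)
  refine Relation.EqvGen.rel _ _ ?_
  simpa [hf] using this

theorem swap (a b : α) (B : List α) : Heq c (a :: b :: B) (b :: c a b :: B) :=
  Relation.EqvGen.rel _ _ (Mv.mk [] a b B)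

theorem pull (x : List α) (b : α) (B : List α) :
    Heq c (x ++ b :: B) (b :: (x.map (fun a => c a b) ++ B)) := by
  induction x with
  | nil => exact rfl' _
  | cons a x ih => exact (cons a ih).trans' (swap a b _)

theorem exists_pull {r : α} {R : List α} (h : r ∈ R) : ∃ R1, Heq c R (r :: R1) := by
  obtain ⟨A, B, rfl⟩ := List.append_of_mem h
  exact ⟨_, pull A r B⟩

theorem length_eq {L M : List α} (h : Heq c L M) : L.length = M.length := by
  induction h with
  | rel x y h => obtain ⟨A, a, b, B⟩ := h; simp
  | refl x => rfl
  | symm x y _ ih => exact ih.symm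
  | trans x y z _ _ ih1 ih2 => exact ih1.trans ih2

end Heq

def cG {G : Type} [Group G] (a b : G) : G := b⁻¹ * a * b

def cK {G : Type} [Group G] (a b : G × Bool) : G × Bool := (b.1⁻¹ * a.1 * b.1, a.2)

theorem heq_of_hurwitz {G : Type} [Group G] {k : ℕ} {g h : Fin k → G} (H : HurwitzEquiv g h) :
    Heq cG (List.ofFn g) (List.ofFn h) := by
  unfold HurwitzEquiv at H
  induction H with
  | refl x => exact Heq.rfl' _
  | symm x y _ ih => exact ih.symm'
  | trans x y z _ _ ih1 ih2 => exact ih1.trans' ih2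
  | rel g h H =>
    obtain ⟨i, hi, h1, h2, h3⟩ := H
    have key : ∀ f : Fin k → G, List.ofFn f = (List.ofFn f).take i ++
        f ⟨i, Nat.lt_of_succ_lt hi⟩ :: f ⟨i + 1, hi⟩ :: (List.ofFn f).drop (i + 2) := by
      intro f
      conv_lhs => rw [← List.take_append_drop i (List.ofFn f)]
      congr 1
      rw [List.drop_eq_getElem_cons (by simp; omega), List.drop_eq_getElem_cons (by simp; omega)]
      simp
    have ht : (List.ofFn h).take i = (List.ofFn g).take i := by
      apply List.ext_getElem
      · simp
      · intro n a b
        simp at a b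
        simp
        exact h3 _ (by simp; omega) (by simp; omega)
    have hd : (List.ofFn h).drop (i + 2) = (List.ofFn g).drop (i + 2) := by
      apply List.ext_getElem
      · simp
      · intro n a b
        simp at a b
        simp
        exact h3 _ (by simp; omega) (by simp; omega)
    rw [key g, key h, ht, hd, h1, h2]
    exact Relation.EqvGen.rel _ _ (Mv.mk _ _ _ _)

theorem hurwitz_of_heq_aux {G : Type} [Group G] {L M : List G} (H : Heq cG L M) :
    ∀ (k : ℕ) (hl : L.length = k) (hm : M.length = k),
      HurwitzEquiv (fun i : Fin k => L[i.val]'(hl ▸ i.isLt))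
        (fun i : Fin k => M[i.val]'(hm ▸ i.isLt)) := by
  unfold Heq at H
  induction H with
  | refl x => intro k hl hm; exact Relation.EqvGen.refl _
  | symm x y _ ih => intro k hl hm; exact Relation.EqvGen.symm _ _ (ih k hm hl)
  | trans x y z h1 _ ih1 ih2 =>
    intro k hl hm
    have hy : y.length = k := (Heq.length_eq h1).symm.trans hl
    exact Relation.EqvGen.trans _ _ _ (ih1 k hl hy) (ih2 k hy hm)
  | rel x y h =>
    intro k hl hm
    obtain ⟨A, a, b, B⟩ := h
    have hk : A.length + 1 < k := by
      rw [← hl]; simp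
    refine Relation.EqvGen.rel _ _ ⟨A.length, hk, ?_, ?_, ?_⟩
    · simp
    · simp [cG]
    · intro j hj1 hj2
      rcases lt_or_ge j.val A.length with hlt | hge
      · simp [List.getElem_append_left hlt]
      · obtain ⟨m, hm'⟩ : ∃ m, j.val = A.length + (m + 2) := ⟨j.val - A.length - 2, by omega⟩
        simp [hm']

theorem hurwitz_of_heq {G : Type} [Group G] {k : ℕ} {g h : Fin k → G}
    (H : Heq cG (List.ofFn g) (List.ofFn h)) : HurwitzEquiv g h := by
  have := hurwitz_of_heq_aux H k (by simp) (by simp)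
  simpa using this

/-! ### Translation of the finite checks -/

abbrev P6 := Equiv.Perm (Fin 6)

def FixEq (a b : P6) : Prop := ∀ i, a i = i ↔ b i = i

def OddP (a b : P6) : Prop := (a * b) ^ 3 = 1 ∨ (a * b) ^ 5 = 1

/-- `x` commutes with every involution having the same fixed points as `s`. -/
def Cen (s x : P6) : Prop := ∀ v, CC v → FixEq v s → x * v = v * x

def S3 (t s a : P6) : Prop := OddP t (a * s * a) ∨ OddP t (a * (s * (a * s * a) * s) * a)

def S4 (t s a b : P6) : Prop :=
  (S3 t s a ∨ S3 t s b) ∨ OddP t (b * (a * s * a) * b) ∨ OddP t (a * (b * (a * s * a) * b) * a)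

theorem CC.mem {p : P6} (h : CC p) : encP p ∈ invL := mem_invL p h.1 h.2.1 h.2.2

theorem enc_one : encP 1 = oneN := by decide

theorem beq_iff (a b : ℕ) : Nat.beq a b = true ↔ a = b :=
  ⟨Nat.eq_of_beq_eq_true, fun h => by subst h; exact Nat.beq_refl a⟩

theorem enc_iff (p q : P6) : encP p = encP q ↔ p = q := ⟨enc_inj, fun h => by rw [h]⟩

theorem com_iff (p q : P6) : comN (encP p) (encP q) = true ↔ p * q = q * p := by
  rw [comN, beq_iff, ← enc_mul, ← enc_mul, enc_iff]

theorem odd_iff (p q : P6) : oddN (encP p) (encP q) = true ↔ OddP p q := by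
  simp only [oddN, mulF_eq, Bool.or_eq_true, beq_iff, ← enc_mul, ← enc_one, enc_iff, OddP]
  have e3 : p * q * (p * q) * (p * q) = (p * q) ^ 3 := by
    simp only [pow_succ, pow_zero, one_mul]
  have e5 : (p * q) ^ 3 * (p * q * (p * q)) = (p * q) ^ 5 := by
    simp only [pow_succ, pow_zero, one_mul, mul_assoc]
  rw [e3, e5]

theorem fix_iff (p q : P6) : fixN (encP p) (encP q) = true ↔ FixEq p q := by
  have h : ∀ (r : P6) (i : Fin 6), appN (encP r) i.val = i.val ↔ r i = i := by
    intro r i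
    rw [appN_enc, Fin.ext_iff]
  have hb : ∀ i : Fin 6, ((Nat.beq (appN (encP p) i.val) i.val) ==
      (Nat.beq (appN (encP q) i.val) i.val)) = true ↔ (p i = i ↔ q i = i) := by
    intro i
    rw [← h p i, ← h q i, ← beq_iff, ← beq_iff]
    generalize Nat.beq _ _ = b1
    generalize Nat.beq _ _ = b2
    cases b1 <;> cases b2 <;> simp
  constructor
  · intro H i
    rw [fixN, List.all_eq_true] at H
    rw [← hb i]
    apply H
    have := i.isLt
    simp
    omega
  · intro H
    rw [fixN, List.all_eq_true]
    intro j hj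
    have hj6 : j < 6 := by
      simp at hj
      omega
    exact (hb ⟨j, hj6⟩).2 (H _)

theorem cen_of (s x : P6) (h : cenN (encP s) (encP x) = true) : Cen s x := by
  intro v hv hf
  rw [cenN, List.all_eq_true] at h
  have := h _ hv.mem
  rw [(fix_iff v s).2 hf] at this
  exact (com_iff x v).1 (by simpa using this)

theorem s3_iff (t s a : P6) : solved3 (encP t) (encP s) (encP a) = true ↔ S3 t s a := by
  simp only [solved3, conjF_eq, ← enc_mul, Bool.or_eq_true, odd_iff, S3]

theorem s4_iff (t s a b : P6) :
    solved4 (encP t) (encP s) (encP a) (encP b) = true ↔ S4 t s a b := by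
  simp only [solved4, conjF_eq, ← enc_mul, Bool.or_eq_true, odd_iff, S4, s3_iff]

def t0 : P6 := Equiv.swap 0 1 * Equiv.swap 2 3

theorem enc_t0 : encP t0 = tN := by decide

theorem xList_spec : ∀ n ∈ xList, ∃ x : P6, encP x = n ∧ x ≠ 1 := by
  intro n hn
  simp only [xList, List.mem_cons, List.not_mem_nil, or_false] at hn
  rcases hn with rfl | rfl
  · exact ⟨Equiv.swap 4 5, by decide, by decide⟩
  · exact ⟨Equiv.swap 0 1 * Equiv.swap 2 3 * Equiv.swap 4 5, by decide, by decide⟩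

theorem yList_spec : ∀ n ∈ yList, ∃ x : P6, encP x = n ∧ x ≠ 1 := by
  intro n hn
  simp only [yList, List.mem_cons, List.not_mem_nil, or_false] at hn
  rcases hn with rfl | rfl | rfl | rfl
  · exact ⟨Equiv.swap 2 3, by decide, by decide⟩
  · exact ⟨Equiv.swap 0 1, by decide, by decide⟩
  · exact ⟨Equiv.swap 0 2 * Equiv.swap 1 3 * Equiv.swap 4 5, by decide, by decide⟩
  · exact ⟨Equiv.swap 0 3 * Equiv.swap 1 2 * Equiv.swap 4 5, by decide, by decide⟩

/-- The finite group-theoretic input. -/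
theorem finite_check (s : P6) (hs : CC s) : OddP t0 s ∨ ∃ x : P6, x ≠ 1 ∧ x * t0 = t0 * x ∧
    x * s = s * x ∧ Cen t0 x ∧ ∀ a, CC a → x * a = a * x ∨ S3 t0 s a ∨
      ∃ y : P6, y ≠ 1 ∧ y * t0 = t0 * y ∧ y * s = s * y ∧ y * a = a * y ∧ (Cen t0 y ∨ Cen s y) ∧
        ∀ b, CC b → y * b = b * y ∨ S4 t0 s a b := by
  have H := checkAll_true
  rw [checkAll, List.all_eq_true] at H
  have H1 := H _ hs.mem
  rw [← enc_t0, Bool.or_eq_true, odd_iff] at H1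
  refine H1.imp_right ?_
  intro H2
  rw [List.any_eq_true] at H2
  obtain ⟨n, hn, H3⟩ := H2
  obtain ⟨x, rfl, hx1⟩ := xList_spec n hn
  simp only [Bool.and_eq_true, com_iff] at H3
  obtain ⟨h1, h2, h3, h4⟩ := H3
  refine ⟨x, hx1, h1, h2, cen_of _ _ h3, ?_⟩
  intro a ha
  rw [List.all_eq_true] at h4
  have H5 := h4 _ ha.mem
  simp only [Bool.or_eq_true, com_iff, s3_iff] at H5
  refine H5.imp_right (Or.imp_right ?_)
  intro H6
  rw [List.any_eq_true] at H6
  obtain ⟨m, hm, H7⟩ := H6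
  obtain ⟨y, rfl, hy1⟩ := yList_spec m hm
  simp only [Bool.and_eq_true, Bool.or_eq_true, com_iff] at H7
  obtain ⟨k1, k2, k3, k4, k5⟩ := H7
  refine ⟨y, hy1, k1, k2, k3, k4.imp (cen_of _ _) (cen_of _ _), ?_⟩
  intro b hb
  rw [List.all_eq_true] at k5
  have H8 := k5 _ hb.mem
  simpa only [Bool.or_eq_true, com_iff, s4_iff] using H8

theorem FixEq.symm' {a b : P6} (h : FixEq a b) : FixEq b a := fun i => (h i).symm
theorem FixEq.trans' {a b c : P6} (h : FixEq a b) (k : FixEq b c) : FixEq a c :=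
  fun i => (h i).trans (k i)

/-- `(u, v)` is an expansion of `a`. -/
structure Good (a u v : P6) : Prop where
  cu : CC u
  cv : CC v
  fix : FixEq u v
  ne : u ≠ v
  mul : u * v = a

theorem Good.pair {a u v : P6} (h : Good a u v) : u * v = v * u ∧ FixEq u a := by
  have H := checkPair_true
  rw [checkPair, List.all_eq_true] at H
  have H1 := H _ h.cu.mem
  rw [List.all_eq_true] at H1
  have H2 := H1 _ h.cv.mem
  rw [(fix_iff u v).2 h.fix, ← enc_mul] at H2
  simp only [Bool.not_true, Bool.or_eq_true, beq_iff, enc_iff, Bool.and_eq_true, com_iff, fix_iff,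
    h.mul] at H2
  rcases H2 with H2 | H2 | H2
  · exact absurd H2 (by decide)
  · exact absurd H2 h.ne
  · exact ⟨h.mul.trans H2.1, H2.2⟩

theorem Good.cca {a u v : P6} (h : Good a u v) : CC a := by
  have hc := h.pair.1
  obtain ⟨⟨u1, u2, u3⟩, ⟨v1, v2, v3⟩, -, hne, rfl⟩ := h
  refine ⟨?_, ?_, ?_⟩
  · calc u * v * (u * v) = u * (v * u) * v := by group
      _ = (u * u) * (v * v) := by rw [← hc]; group
      _ = 1 := by rw [u1, v1, one_mul]
  · intro h1
    apply hne
    calc u = u * (v * v) := by rw [v1, mul_one]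
      _ = v := by rw [← mul_assoc, h1, one_mul]
  · rw [map_mul, u3, v3, one_mul]

theorem Good.ne_a {a u v : P6} (h : Good a u v) : u ≠ a := by
  intro h1
  apply h.cv.2.1
  have := h.mul
  rw [← h1] at this
  simpa using this

theorem Good.uniq {a u v u' v' : P6} (h : Good a u v) (h' : Good a u' v') :
    (u' = u ∧ v' = v) ∨ (u' = v ∧ v' = u) := by
  have H := checkUniq_true
  rw [checkUniq, List.all_eq_true] at H
  have H1 := H _ h.cca.mem
  rw [List.all_eq_true] at H1
  have H2 := H1 _ h.cu.mem
  rw [(fix_iff u a).2 h.pair.2] at H2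
  simp only [Bool.not_true, Bool.or_eq_true, beq_iff, enc_iff] at H2
  rcases H2 with H2 | H2 | H2
  · exact absurd H2 (by decide)
  · exact absurd H2 h.ne_a
  rw [List.all_eq_true] at H2
  have H3 := H2 _ h'.cu.mem
  rw [(fix_iff u' a).2 h'.pair.2, ← enc_mul] at H3
  simp only [Bool.not_true, Bool.or_eq_true, beq_iff, enc_iff] at H3
  have hm := h.mul
  have hm' := h'.mul
  have e1 : u * a = v := by rw [← hm, ← mul_assoc, h.cu.1, one_mul]
  rcases H3 with H3 | H3 | H3 | H3
  · exact absurd H3 (by decide)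
  · exact absurd H3 h'.ne_a
  · subst H3
    left
    exact ⟨rfl, mul_left_cancel (hm'.trans hm.symm)⟩
  · right
    rw [e1] at H3
    subst H3
    refine ⟨rfl, mul_left_cancel (hm'.trans (hm.symm.trans h.pair.1))⟩

theorem CC.conj {a : P6} (b : P6) (h : CC a) : CC (b⁻¹ * a * b) := by
  obtain ⟨h1, h2, h3⟩ := h
  refine ⟨?_, ?_, ?_⟩
  · calc b⁻¹ * a * b * (b⁻¹ * a * b) = b⁻¹ * (a * a) * b := by group
      _ = 1 := by rw [h1]; group
  · intro h
    apply h2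
    calc a = b * (b⁻¹ * a * b) * b⁻¹ := by group
      _ = 1 := by rw [h]; group
  · rw [map_mul, map_mul, h3, map_inv]; simp

theorem CC.inv {a : P6} (h : CC a) : a⁻¹ = a := inv_eq_of_mul_eq_one_left h.1

theorem FixEq.conj {a c : P6} (b : P6) (h : FixEq a c) : FixEq (b⁻¹ * a * b) (b⁻¹ * c * b) := by
  intro i
  have e : ∀ d : P6, (b⁻¹ * d * b) i = i ↔ d (b i) = b i := by
    intro d
    rw [Equiv.Perm.mul_apply, Equiv.Perm.mul_apply, Equiv.Perm.inv_eq_iff_eq]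
  rw [e, e]
  exact h _

theorem conj_conj (a b : P6) : b⁻¹⁻¹ * (b⁻¹ * a * b) * b⁻¹ = a := by group

theorem CC.conj_iff {a b : P6} : CC (b⁻¹ * a * b) ↔ CC a :=
  ⟨fun h => by simpa only [conj_conj] using h.conj b⁻¹, fun h => h.conj b⟩

theorem Good.conj {a u v : P6} (b : P6) (h : Good a u v) :
    Good (b⁻¹ * a * b) (b⁻¹ * u * b) (b⁻¹ * v * b) := by
  refine ⟨h.cu.conj b, h.cv.conj b, h.fix.conj b, ?_, ?_⟩
  · intro h'
    exact h.ne (by simpa using h')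
  · rw [← h.mul]; group

theorem exists_conj_t0 {t : P6} (h : CC t) : ∃ b : P6, b⁻¹ * t * b = t0 := by
  have key : ∀ p : P6, CC p → p.cycleType = {2, 2} := by
    intro p hp
    have ho : orderOf p = 2 := orderOf_eq_prime (by rw [pow_two]; exact hp.1) hp.2.1
    obtain ⟨n, hn⟩ := Equiv.Perm.cycleType_prime_order (by rw [ho]; exact Nat.prime_two)
    rw [ho] at hn
    have hsum := Equiv.Perm.sum_cycleType_le p
    rw [hn] at hsum
    simp at hsum
    have hs := hp.2.2
    rw [Equiv.Perm.sign_of_cycleType, hn] at hs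
    have : n = 0 ∨ n = 1 ∨ n = 2 := by omega
    rcases this with rfl | rfl | rfl
    · exact absurd hs (by decide)
    · rw [hn]; rfl
    · exact absurd hs (by decide)
  have ht0 : CC t0 := ⟨by decide, by decide, by decide⟩
  have hc : IsConj t t0 := Equiv.Perm.isConj_iff_cycleType_eq.2 ((key t h).trans (key t0 ht0).symm)
  obtain ⟨c, hc⟩ := isConj_iff.1 hc
  exact ⟨c⁻¹, by simpa using hc⟩

/-! ### Marked lists -/

def Com (x : P6) (L : List P6) : Prop := ∀ r ∈ L, x * r = r * x

theorem com_conj {x a b : P6} (hb : x * b = b * x) :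
    x * (b⁻¹ * a * b) = b⁻¹ * a * b * x ↔ x * a = a * x := by
  have hb' : Commute x b := hb
  have e1 : x * (b⁻¹ * a * b) = b⁻¹ * (x * a) * b := by
    rw [← mul_assoc, ← mul_assoc, (hb'.inv_right).eq, mul_assoc b⁻¹ x a]
  have e2 : b⁻¹ * a * b * x = b⁻¹ * (a * x) * b := by
    rw [mul_assoc _ b x, ← hb]; group
  rw [e1, e2]
  simp

theorem com_iff_heq {x : P6} {L M : List P6} (h : Heq cG L M) : Com x L ↔ Com x M := by
  refine Heq.inv_iff (Com x) ?_ h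
  rintro _ _ ⟨A, a, b, B⟩
  simp only [Com, List.forall_mem_append, List.forall_mem_cons, cG]
  constructor
  · rintro ⟨h1, h2, h3, h4⟩
    exact ⟨h1, h3, (com_conj h3).2 h2, h4⟩
  · rintro ⟨h1, h2, h3, h4⟩
    exact ⟨h1, (com_conj h2).1 h3, h2, h4⟩

def AllC (L : List P6) : Prop := ∀ r ∈ L, CC r

theorem allC_iff_heq {L M : List P6} (h : Heq cG L M) : AllC L ↔ AllC M := by
  refine Heq.inv_iff AllC ?_ h
  rintro _ _ ⟨A, a, b, B⟩
  simp only [AllC, List.forall_mem_append, List.forall_mem_cons, cG, CC.conj_iff]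
  tauto

def unc (R : List P6) : List (P6 × Bool) := R.map (fun r => (r, false))

theorem heq_unc {R R' : List P6} (h : Heq cG R R') : Heq cK (unc R) (unc R') :=
  h.map (d := cK) (fun r => (r, false)) (fun _ _ => rfl)

/-- `R` can be used to turn `s` into `x`, whatever the mark of `s`. -/
def Reach (s : P6) (R : List P6) (x : P6) (R' : List P6) : Prop :=
  ∀ m : Bool, Heq cK ((s, m) :: unc R) ((x, m) :: unc R')

theorem Reach.trans' {s x y : P6} {R R' R'' : List P6} (h : Reach s R x R')
    (k : Reach x R' y R'') : Reach s R y R'' := fun m => (h m).trans' (k m)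

theorem Reach.of_heq {s : P6} {R R' : List P6} (h : Heq cG R R') : Reach s R s R' :=
  fun _ => (heq_unc h).cons _

theorem CC.conj' {a s : P6} (ha : CC a) (hs : CC s) : CC (a * s * a) := by
  have := hs.conj a
  rwa [ha.inv] at this

theorem Reach.push {s r : P6} (hs : CC s) (hr : CC r) (R : List P6) :
    Reach s (r :: R) (r * s * r) (((r * s * r) * r * (r * s * r)) :: R) := by
  intro m
  have h1 := Heq.swap (c := cK) (s, m) (r, false) (unc R)
  have h2 := Heq.swap (c := cK) (r, false) (r * s * r, m) (unc R)
  have e1 : cK (s, m) (r, false) = (r * s * r, m) := by simp [cK, hr.inv]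
  have e2 : cK (r, false) (r * s * r, m) = ((r * s * r) * r * (r * s * r), false) := by
    simp only [cK, (hr.conj' hs).inv]
  rw [e1] at h1
  rw [e2] at h2
  exact h1.trans' h2

theorem heq_pull_two {a b : P6} (hb : CC b) (R : List P6) :
    Heq cG (a :: b :: R) (b :: (b * a * b) :: R) := by
  have := Heq.swap (c := cG) a b R
  rwa [cG, hb.inv] at this

theorem heq_pull_inv {a b : P6} (ha : CC a) (R : List P6) :
    Heq cG (a :: b :: R) ((a * b * a) :: a :: R) := by
  have := heq_pull_two (a := a * b * a) ha R
  have e : a * (a * b * a) * a = b := by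
    rw [← mul_assoc, ← mul_assoc, ha.1, one_mul, mul_assoc, ha.1, mul_one]
  rw [e] at this
  exact this.symm'

theorem odd_step {t x : P6} (ht : CC t) (hx : CC x) (n : ℕ) (m m' : Bool)
    (B : List (P6 × Bool)) :
    Heq cK ((t * (t * x) ^ n, m) :: (t * (t * x) ^ (n + 1), m') :: B)
      ((t * (t * x) ^ (n + 1), m') :: (t * (t * x) ^ (n + 2), m) :: B) := by
  have h := Heq.swap (c := cK) (t * (t * x) ^ n, m) (t * (t * x) ^ (n + 1), m') B
  have e : cK (t * (t * x) ^ n, m) (t * (t * x) ^ (n + 1), m') = (t * (t * x) ^ (n + 2), m) := by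
    have hp : (t * x)⁻¹ * t = t * (t * x) := by
      rw [mul_inv_rev, ht.inv, hx.inv, mul_assoc, ← mul_assoc t t x, ht.1, one_mul, mul_one]
    simp only [cK, Prod.mk.injEq, and_true]
    generalize t * x = p at *
    calc (t * p ^ (n + 1))⁻¹ * (t * p ^ n) * (t * p ^ (n + 1))
        = (p⁻¹ * t) * p ^ (n + 1) := by group
      _ = t * p ^ (n + 2) := by rw [hp]; group
  rwa [e] at h

theorem odd_swap {t x : P6} (ht : CC t) (hx : CC x) (h : OddP t x) (m m' : Bool)
    (B : List (P6 × Bool)) :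
    Heq cK ((t, m) :: (x, m') :: B) ((t, m') :: (x, m) :: B) := by
  have ex : t * (t * x) = x := by rw [← mul_assoc, ht.1, one_mul]
  have s0 := odd_step ht hx 0 m m' B
  have s1 := odd_step ht hx 1 m' m B
  have s2 := odd_step ht hx 2 m m' B
  have s3 := odd_step ht hx 3 m' m B
  have s4 := odd_step ht hx 4 m m' B
  have h3 := s0.trans' (s1.trans' s2)
  have h5 := h3.trans' (s3.trans' s4)
  rcases h with h | h
  · simpa only [pow_zero, mul_one, Nat.reduceAdd, zero_add, pow_one, ex, pow_succ _ 3, h, one_mul]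
      using h3
  · simpa only [pow_zero, mul_one, Nat.reduceAdd, zero_add, pow_one, ex, pow_succ _ 5, h, one_mul]
      using h5

def Sw (t s : P6) (R : List P6) : Prop :=
  Heq cK ((t, true) :: (s, false) :: unc R) ((t, false) :: (s, true) :: unc R)

theorem Sw.of_reach {t s x : P6} {R R' : List P6} (ht : CC t) (hx : CC x) (h : OddP t x)
    (hr : Reach s R x R') : Sw t s R :=
  ((hr false).cons _).trans' ((odd_swap ht hx h _ _ _).trans' ((hr true).cons _).symm')

theorem Sw.of_heq {t s : P6} {R R' : List P6} (h : Heq cG R R') (k : Sw t s R') : Sw t s R :=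
  (((heq_unc h).cons _).cons _).trans' (Heq.trans' k (((heq_unc h).cons _).cons _).symm')

theorem Sw.of_s3 {t s a : P6} (ht : CC t) (hs : CC s) (ha : CC a) (h : S3 t s a) (R : List P6) :
    Sw t s (a :: R) := by
  have r1 := Reach.push hs ha R
  have hc := ha.conj' hs
  rcases h with h | h
  · exact Sw.of_reach ht hc h r1
  · have r2 := r1.trans' (Reach.push hc (hc.conj' ha) R)
    have e : a * s * a * a * (a * s * a) * (a * s * a) * (a * s * a * a * (a * s * a)) =
        a * (s * (a * s * a) * s) * a := by
      have ha' : ∀ y, a * (a * y) = y := fun y => by rw [← mul_assoc, ha.1, one_mul]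
      have hs' : ∀ y, s * (s * y) = y := fun y => by rw [← mul_assoc, hs.1, one_mul]
      simp only [mul_assoc, ha', hs']
    exact Sw.of_reach ht (ha.conj' (hs.conj' hc)) h (e ▸ r2)

theorem Sw.of_s4 {t s a b : P6} (ht : CC t) (hs : CC s) (ha : CC a) (hb : CC b)
    (h : S4 t s a b) (R : List P6) : Sw t s (a :: b :: R) := by
  rcases h with (h | h) | h | h
  · exact Sw.of_s3 ht hs ha h _
  · exact Sw.of_heq (heq_pull_two hb R) (Sw.of_s3 ht hs hb h _)
  · have hc := ha.conj' hs
    exact Sw.of_reach ht (hb.conj' hc) h ((Reach.push hs ha _).trans'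
      ((Reach.of_heq (heq_pull_two hb R)).trans' (Reach.push hc hb _)))
  · have hc := ha.conj' hs
    refine Sw.of_heq (heq_pull_inv ha R) ?_
    have e : a * b * a * s * (a * b * a) = a * (b * (a * s * a) * b) * a := by
      simp only [mul_assoc]
    exact Sw.of_reach ht (ha.conj' (hb.conj' hc)) h (e ▸ Reach.push hs (ha.conj' hb) (a :: R))

theorem sw_t0 {s : P6} {R : List P6} (hs : CC s) (hR : AllC R)
    (hT : ∀ x, Cen t0 x → Com x (t0 :: s :: R) → x = 1)
    (hS : ∀ x, Cen s x → Com x (t0 :: s :: R) → x = 1) : Sw t0 s R := by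
  have ht0 : CC t0 := ⟨by decide, by decide, by decide⟩
  rcases finite_check s hs with h | ⟨x, hx1, hxt, hxs, hxc, hx⟩
  · exact Sw.of_reach ht0 hs h (Reach.of_heq (Heq.rfl' R))
  have h1 : ¬ Com x R := by
    intro h
    refine hx1 (hT x hxc ?_)
    simp only [Com, List.forall_mem_cons]
    exact ⟨hxt, hxs, h⟩
  simp only [Com, not_forall] at h1
  obtain ⟨a, haR, hxa⟩ := h1
  obtain ⟨R1, hR1⟩ := Heq.exists_pull (c := cG) haR
  have ha := hR a haR
  refine Sw.of_heq hR1 ?_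
  rcases hx a ha with h | h | ⟨y, hy1, hyt, hys, hya, hyc, hy⟩
  · exact absurd h hxa
  · exact Sw.of_s3 ht0 hs ha h _
  have h2 : ¬ Com y R1 := by
    intro h
    have h3 : Com y (t0 :: s :: R) := by
      rw [com_iff_heq ((hR1.cons s).cons t0)]
      simp only [Com, List.forall_mem_cons]
      exact ⟨hyt, hys, hya, h⟩
    rcases hyc with hyc | hyc
    · exact hy1 (hT y hyc h3)
    · exact hy1 (hS y hyc h3)
  simp only [Com, not_forall] at h2
  obtain ⟨b, hbR, hyb⟩ := h2
  obtain ⟨R2, hR2⟩ := Heq.exists_pull (c := cG) hbR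
  have hb : CC b := (allC_iff_heq hR1).1 hR b (List.mem_cons_of_mem _ hbR)
  refine Sw.of_heq (hR2.cons a) ?_
  rcases hy b hb with h | h
  · exact absurd h hyb
  · exact Sw.of_s4 ht0 hs ha hb h _

theorem Cen.conj {s x : P6} (b : P6) (h : Cen (b⁻¹ * s * b) x) : Cen s (b * x * b⁻¹) := by
  intro v hv hf
  have := h _ (hv.conj b) (hf.conj b)
  calc b * x * b⁻¹ * v = b * (x * (b⁻¹ * v * b)) * b⁻¹ := by group
    _ = v * (b * x * b⁻¹) := by rw [this]; group

theorem sw_main {t s : P6} {R : List P6} (ht : CC t) (hs : CC s) (hR : AllC R)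
    (hT : ∀ x, Cen t x → Com x (t :: s :: R) → x = 1)
    (hS : ∀ x, Cen s x → Com x (t :: s :: R) → x = 1) : Sw t s R := by
  obtain ⟨b, hb⟩ := exists_conj_t0 ht
  have hcom : ∀ x, Com x (t0 :: (b⁻¹ * s * b) :: R.map (fun r => b⁻¹ * r * b)) →
      Com (b * x * b⁻¹) (t :: s :: R) := by
    intro x h r hr
    have h' : Com x ((t :: s :: R).map (fun r => b⁻¹ * r * b)) := by
      simpa only [List.map_cons, hb] using h
    have := h' _ (List.mem_map_of_mem hr)
    calc b * x * b⁻¹ * r = b * (x * (b⁻¹ * r * b)) * b⁻¹ := by group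
      _ = r * (b * x * b⁻¹) := by rw [this]; group
  have h1 : ∀ x : P6, b * x * b⁻¹ = 1 → x = 1 := by
    intro x hx
    simpa using hx
  have key : Sw t0 (b⁻¹ * s * b) (R.map (fun r => b⁻¹ * r * b)) := by
    refine sw_t0 (hs.conj b) ?_ ?_ ?_
    · intro r hr
      obtain ⟨r', hr', rfl⟩ := List.mem_map.1 hr
      exact (hR r' hr').conj b
    · intro x hx hc
      rw [← hb] at hx
      exact h1 x (hT _ (hx.conj b) (hcom x hc))
    · intro x hx hc
      exact h1 x (hS _ (hx.conj b) (hcom x hc))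
  have := Heq.map (d := cK) (fun p : P6 × Bool => (b * p.1 * b⁻¹, p.2))
    (by intro p q; simp [cK, mul_assoc]) key
  have e : ∀ r, b * (b⁻¹ * r * b) * b⁻¹ = r := fun r => by group
  have eu : (unc (R.map (fun r => b⁻¹ * r * b))).map (fun p : P6 × Bool => (b * p.1 * b⁻¹, p.2))
      = unc R := by
    simp only [unc, List.map_map]
    apply List.map_congr_left
    intro r _
    simp only [Function.comp, e]
  rw [← hb] at this
  unfold Sw
  simpa only [List.map_cons, e, eu] using this

/-! ### Expansion -/

open Classical in
noncomputable def pr (a : P6) : List P6 :=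
  if h : ∃ u v, Good a u v then [h.choose, h.choose_spec.choose] else [a]

theorem Good.exists_pr {a u v : P6} (h : Good a u v) : ∃ u' v', pr a = [u', v'] ∧ Good a u' v' := by
  have h' : ∃ u v, Good a u v := ⟨u, v, h⟩
  exact ⟨_, _, dif_pos h', h'.choose_spec.choose_spec⟩

theorem Good.pr_heq {a u v : P6} (h : Good a u v) (B : List P6) :
    Heq cG (pr a ++ B) (u :: v :: B) := by
  obtain ⟨u', v', e, h'⟩ := h.exists_pr
  rw [e]
  rcases h.uniq h' with ⟨rfl, rfl⟩ | ⟨rfl, rfl⟩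
  · exact Heq.rfl' _
  · have := Heq.swap (c := cG) u' v' B
    have e2 : cG u' v' = u' := by
      rw [cG, mul_assoc, h'.pair.1, ← mul_assoc, inv_mul_cancel, one_mul]
    rw [e2] at this
    exact this

noncomputable def blk (p : P6 × Bool) : List P6 := if p.2 = true then pr p.1 else [p.1]

noncomputable def expand (c : List (P6 × Bool)) : List P6 := c.flatMap blk

def Ok1 (p : P6 × Bool) : Prop := p.2 = true → ∃ u v, Good p.1 u v

def Ok (c : List (P6 × Bool)) : Prop := ∀ p ∈ c, Ok1 p

theorem ok1_conj {p q : P6 × Bool} : Ok1 (cK p q) ↔ Ok1 p := by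
  unfold Ok1 cK
  refine imp_congr_right fun _ => ⟨?_, ?_⟩
  · rintro ⟨u, v, h⟩
    have := h.conj q.1⁻¹
    rw [conj_conj] at this
    exact ⟨_, _, this⟩
  · rintro ⟨u, v, h⟩
    exact ⟨_, _, h.conj q.1⟩

theorem ok_iff_heq {c d : List (P6 × Bool)} (h : Heq cK c d) : Ok c ↔ Ok d := by
  refine Heq.inv_iff Ok ?_ h
  rintro _ _ ⟨A, a, b, B⟩
  simp only [Ok, List.forall_mem_append, List.forall_mem_cons, ok1_conj]
  tauto

theorem blk_prod {p : P6 × Bool} (h : Ok1 p) : (blk p).prod = p.1 := by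
  obtain ⟨a, m⟩ := p
  cases m
  · simp [blk]
  · obtain ⟨u, v, h⟩ := h rfl
    obtain ⟨u', v', e, h'⟩ := h.exists_pr
    simp [blk, e, h'.mul]

theorem pull_list (x y B : List P6) :
    Heq cG (x ++ (y ++ B)) (y ++ (x.map (fun a => cG a y.prod) ++ B)) := by
  induction y generalizing x with
  | nil => simpa [cG] using Heq.rfl' (c := cG) (x ++ B)
  | cons b y ih =>
    have h1 := Heq.pull (c := cG) x b (y ++ B)
    refine h1.trans' (Heq.cons b ?_)
    have h2 := ih (x.map (fun a => cG a b))
    rw [List.map_map] at h2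
    have e : x.map (fun a => cG a (b :: y).prod) =
        x.map ((fun a => cG a y.prod) ∘ fun a => cG a b) := by
      apply List.map_congr_left
      intro a _
      simp only [Function.comp, cG, List.prod_cons]
      group
    rw [e]
    exact h2

theorem blk_conj {p q : P6 × Bool} (h : Ok1 p) (B : List P6) :
    Heq cG ((blk p).map (fun a => cG a q.1) ++ B) (blk (cK p q) ++ B) := by
  obtain ⟨a, m⟩ := p
  cases m
  · exact Heq.rfl' _
  · obtain ⟨u, v, h⟩ := h rfl
    obtain ⟨u', v', e, h'⟩ := h.exists_pr
    have := ((h'.conj q.1).pr_heq B).symm'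
    simpa [blk, e, cG, cK] using this

theorem expand_heq {c d : List (P6 × Bool)} (h : Heq cK c d) (hc : Ok c) :
    Heq cG (expand c) (expand d) := by
  unfold Heq at h
  induction h with
  | refl x => exact Heq.rfl' _
  | symm x y h ih => exact (ih ((ok_iff_heq h).2 hc)).symm'
  | trans x y z h1 _ ih1 ih2 => exact (ih1 hc).trans' (ih2 ((ok_iff_heq h1).1 hc))
  | rel x y h =>
    obtain ⟨A, a, b, B⟩ := h
    simp only [Ok, List.forall_mem_append, List.forall_mem_cons] at hc
    obtain ⟨-, ha, hb, -⟩ := hc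
    simp only [expand, List.flatMap_append, List.flatMap_cons]
    refine Heq.append_left _ ?_
    refine (pull_list (blk a) (blk b) _).trans' (Heq.append_left _ ?_)
    rw [blk_prod hb]
    exact blk_conj ha _

theorem expand_unc (R : List P6) : expand (unc R) = R := by
  induction R with
  | nil => rfl
  | cons a R ih =>
    simp only [expand, unc, List.map_cons, List.flatMap_cons] at ih ⊢
    rw [ih]
    simp [blk]

theorem heq_lift {L M : List P6} (h : Heq cG L M) :
    (∀ c : List (P6 × Bool), c.map Prod.fst = L → ∃ d, d.map Prod.fst = M ∧ Heq cK c d) ∧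
    (∀ d : List (P6 × Bool), d.map Prod.fst = M → ∃ c, c.map Prod.fst = L ∧ Heq cK c d) := by
  unfold Heq at h
  induction h with
  | refl x => exact ⟨fun c hc => ⟨c, hc, Heq.rfl' _⟩, fun c hc => ⟨c, hc, Heq.rfl' _⟩⟩
  | symm x y _ ih =>
    refine ⟨fun c hc => ?_, fun c hc => ?_⟩
    · obtain ⟨d, h1, h2⟩ := ih.2 c hc
      exact ⟨d, h1, h2.symm'⟩
    · obtain ⟨d, h1, h2⟩ := ih.1 c hc
      exact ⟨d, h1, h2.symm'⟩
  | trans x y z _ _ ih1 ih2 =>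
    refine ⟨fun c hc => ?_, fun c hc => ?_⟩
    · obtain ⟨d, h1, h2⟩ := ih1.1 c hc
      obtain ⟨e, h3, h4⟩ := ih2.1 d h1
      exact ⟨e, h3, h2.trans' h4⟩
    · obtain ⟨d, h1, h2⟩ := ih2.2 c hc
      obtain ⟨e, h3, h4⟩ := ih1.2 d h1
      exact ⟨e, h3, h4.trans' h2⟩
  | rel x y h =>
    obtain ⟨A, a, b, B⟩ := h
    refine ⟨fun c hc => ?_, fun c hc => ?_⟩
    · obtain ⟨A', c1, rfl, rfl, h1⟩ := List.map_eq_append_iff.1 hc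
      obtain ⟨a', c2, rfl, rfl, h2⟩ := List.map_eq_cons_iff.1 h1
      obtain ⟨b', c3, rfl, rfl, rfl⟩ := List.map_eq_cons_iff.1 h2
      exact ⟨A' ++ b' :: cK a' b' :: c3, by simp [cK, cG], Relation.EqvGen.rel _ _ (Mv.mk _ _ _ _)⟩
    · obtain ⟨A', c1, rfl, rfl, h1⟩ := List.map_eq_append_iff.1 hc
      obtain ⟨b', c2, rfl, rfl, h2⟩ := List.map_eq_cons_iff.1 h1
      obtain ⟨a', c3, rfl, h3, rfl⟩ := List.map_eq_cons_iff.1 h2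
      refine ⟨A' ++ (a, a'.2) :: b' :: c3, by simp, ?_⟩
      have := Mv.mk (c := cK) A' (a, a'.2) b' c3
      have e : cK (a, a'.2) b' = a' := by
        apply Prod.ext
        · exact h3.symm
        · rfl
      rw [e] at this
      exact Relation.EqvGen.rel _ _ this

theorem count_heq {c d : List (P6 × Bool)} (h : Heq cK c d) :
    c.countP Prod.snd = d.countP Prod.snd := by
  unfold Heq at h
  induction h with
  | refl x => rfl
  | symm x y _ ih => exact ih.symm
  | trans x y z _ _ ih1 ih2 => exact ih1.trans ih2
  | rel x y h =>
    obtain ⟨A, a, b, B⟩ := h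
    simp only [List.countP_append, List.countP_cons, cK]
    omega

theorem eq_unc {c : List (P6 × Bool)} (h : c.countP Prod.snd = 0) : c = unc (c.map Prod.fst) := by
  rw [List.countP_eq_zero] at h
  rw [unc, List.map_map]
  conv_lhs => rw [← List.map_id c]
  apply List.map_congr_left
  rintro ⟨a, m⟩ hm
  have := h _ hm
  simp at this
  simp [this]

theorem core {g0 g1 h0 h1 : P6} {G H : List P6} (hg : Good (g0 * g1) g0 g1)
    (hh : Good (h0 * h1) h0 h1) (hH : AllC H)
    (hgc : ∀ x, Com x (g0 :: g1 :: G) → x = 1) (hhc : ∀ x, Com x (h0 :: h1 :: H) → x = 1)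
    (hred : Heq cG ((g0 * g1) :: G) ((h0 * h1) :: H)) :
    Heq cG (g0 :: g1 :: G) (h0 :: h1 :: H) := by
  have hstart : ∀ {a u v : P6} {L : List P6}, Good a u v →
      Heq cG (expand ((a, true) :: unc L)) (u :: v :: L) := by
    intro a u v L h
    have e : expand ((a, true) :: unc L) = pr a ++ L := by
      conv_rhs => rw [← expand_unc L]
      rfl
    rw [e]
    exact h.pr_heq L
  have hOk : Ok ((g0 * g1, true) :: unc G) := by
    intro p hp
    rcases List.mem_cons.1 hp with rfl | hp
    · exact fun _ => ⟨_, _, hg⟩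
    · obtain ⟨r, _, rfl⟩ := List.mem_map.1 hp
      intro h
      exact absurd h (by simp)
  have hfst : ∀ L, (unc L).map Prod.fst = L := by
    intro L
    simp [unc, Function.comp_def]
  have hcnt : ∀ L, (unc L).countP Prod.snd = 0 := by
    intro L
    simp [unc, List.countP_eq_zero]
  obtain ⟨d, hd1, hd2⟩ := (heq_lift hred).1 ((g0 * g1, true) :: unc G) (by simp [hfst])
  have hd3 := count_heq hd2
  have hd4 := expand_heq hd2 hOk
  have hd5 := (ok_iff_heq hd2).1 hOk
  have hfin : Heq cK d ((h0 * h1, true) :: unc H) → Heq cG (g0 :: g1 :: G) (h0 :: h1 :: H) :=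
    fun h => (hstart hg).symm'.trans' (hd4.trans' ((expand_heq h hd5).trans' (hstart hh)))
  obtain ⟨⟨t, m⟩, C, rfl, ht, rfl⟩ := List.map_eq_cons_iff.1 hd1
  simp only at ht
  subst ht
  rw [List.countP_cons, List.countP_cons, hcnt] at hd3
  cases m
  swap
  · apply hfin
    rw [← eq_unc (c := C)]
    · exact Heq.rfl' _
    · simpa using hd3
  have hC : C.countP Prod.snd = 1 := by simpa using hd3.symm
  obtain ⟨⟨s, m⟩, hsC, hm⟩ := List.countP_pos_iff.1 (by rw [hC]; exact Nat.one_pos)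
  simp only at hm
  subst hm
  obtain ⟨A, B, rfl⟩ := List.append_of_mem hsC
  rw [List.countP_append, List.countP_cons] at hC
  simp only [if_true] at hC
  have hA := eq_unc (c := A) (by omega)
  have hB := eq_unc (c := B) (by omega)
  generalize A.map Prod.fst = A1 at hA
  generalize B.map Prod.fst = B1 at hB
  subst hA hB
  simp only [List.map_append, List.map_cons, hfst] at *
  have hpull : ∀ m m', Heq cK ((h0 * h1, m) :: (unc A1 ++ (s, m') :: unc B1))
      ((h0 * h1, m) :: (s, m') :: unc (A1.map (fun a => cG a s) ++ B1)) := by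
    intro m m'
    refine Heq.cons _ ?_
    have := Heq.pull (c := cK) (unc A1) (s, m') (unc B1)
    simpa [unc, cK, cG, Function.comp_def] using this
  have hpull' : Heq cG ((h0 * h1) :: (A1 ++ s :: B1))
      ((h0 * h1) :: s :: (A1.map (fun a => cG a s) ++ B1)) :=
    Heq.cons _ (Heq.pull A1 s B1)
  obtain ⟨u, v, hs⟩ := hd5 (s, true) (by simp) rfl
  have hsw : Sw (h0 * h1) s (A1.map (fun a => cG a s) ++ B1) := by
    refine sw_main hh.cca hs.cca ?_ ?_ ?_
    · intro r hr
      have h1 : AllC (h0 * h1 :: (A1 ++ s :: B1)) := by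
        simp only [AllC, List.forall_mem_cons]
        exact ⟨hh.cca, hH⟩
      exact (allC_iff_heq hpull').1 h1 r (by simp only [List.mem_cons]; exact Or.inr (Or.inr hr))
    · intro x hx hc
      rw [← com_iff_heq hpull'] at hc
      apply hhc
      have e := hh.pair.2
      simp only [Com, List.forall_mem_cons] at hc ⊢
      exact ⟨hx _ hh.cu e, hx _ hh.cv (hh.fix.symm'.trans' e), hc.2⟩
    · intro x hx hc
      rw [← com_iff_heq hpull'] at hc
      apply hgc
      rw [com_iff_heq ((hstart hg).symm'.trans' hd4)]
      obtain ⟨u', v', e, h'⟩ := hs.exists_pr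
      have e2 : expand ((h0 * h1, false) :: (unc A1 ++ (s, true) :: unc B1)) =
          (h0 * h1) :: (A1 ++ u' :: v' :: B1) := by
        have eA := expand_unc A1
        have eB := expand_unc B1
        unfold expand at *
        simp [List.flatMap_append, List.flatMap_cons, eA, eB, blk, e]
      rw [e2]
      have e := h'.pair.2
      simp only [Com, List.forall_mem_cons, List.forall_mem_append] at hc ⊢
      exact ⟨hc.1, hc.2.1, hx _ h'.cu e, hx _ h'.cv (h'.fix.symm'.trans' e), hc.2.2.2⟩
  apply hfin
  have e : unc (A1 ++ s :: B1) = unc A1 ++ (s, false) :: unc B1 := by simp [unc]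
  rw [e]
  exact (hpull _ _).trans' (hsw.symm'.trans' (Heq.symm' (hpull true false)))

/-! ### The Nielsen class -/

theorem cc_of_order {p : P6} (h : p ∈ alternatingGroup (Fin 6)) (ho : orderOf p = 2) : CC p := by
  refine ⟨?_, ?_, Equiv.Perm.mem_alternatingGroup.1 h⟩
  · rw [← pow_two, ← ho]
    exact pow_orderOf_eq_one p
  · rintro rfl
    simp at ho

theorem good_of_fix {u v : P6} (hu : CC u) (hv : CC v) (hne : u ≠ v)
    (h : FixedPts u = FixedPts v) : Good (u * v) u v :=
  ⟨hu, hv, fun i => Set.ext_iff.1 h i, hne, rfl⟩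

theorem a6_trivial {x : P6} (h : ∀ r ∈ alternatingGroup (Fin 6), x * r = r * x) : x = 1 := by
  have key : ∀ i j : Fin 6, i ≠ j → ∃ k l : Fin 6, k ≠ l ∧ k ≠ i ∧ k ≠ j ∧ l ≠ i ∧ l ≠ j := by
    decide
  ext1 i
  rw [Equiv.Perm.one_apply]
  by_contra hne
  obtain ⟨k, l, hkl, hki, hkj, hli, hlj⟩ := key i (x i) (fun e => hne e.symm)
  have h1 := h (Equiv.swap (x i) k * Equiv.swap k l) (by
    rw [Equiv.Perm.mem_alternatingGroup, map_mul, Equiv.Perm.sign_swap hkj.symm,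
      Equiv.Perm.sign_swap hkl]
    decide)
  have h2 := congrArg (fun p : P6 => p i) h1
  simp only [Equiv.Perm.mul_apply] at h2
  rw [Equiv.swap_apply_of_ne_of_ne hki.symm hli.symm,
    Equiv.swap_apply_of_ne_of_ne (Ne.symm hne) hki.symm,
    Equiv.swap_apply_of_ne_of_ne hkj.symm hlj.symm, Equiv.swap_apply_left] at h2
  exact hkj h2.symm

theorem nielsen_com {n : ℕ} {g : Fin n → P6} (hg : g ∈ NielsenSet n) {x : P6}
    (h : Com x (List.ofFn g)) : x = 1 := by
  apply a6_trivial
  have h1 : alternatingGroup (Fin 6) ≤ Subgroup.centralizer {x} := by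
    rw [← hg.2.2.2, Subgroup.closure_le]
    rintro _ ⟨i, rfl⟩
    rw [SetLike.mem_coe, Subgroup.mem_centralizer_singleton_iff]
    exact (h _ (by simp)).symm
  intro r hr
  exact (Subgroup.mem_centralizer_singleton_iff.1 (h1 hr)).symm

/-- Lifting Hurwitz equivalences through `1`-reductions: if two Nielsen tuples
of length `k + 2 > 5` each admit a `1`-reduction in their first two entries and
the reduced tuples are Hurwitz-equivalent, then so are the original tuples. -/
theorem stmt_15 (k : ℕ) (hk : 5 < k + 2)
    (g₀ g₁ h₀ h₁ : Equiv.Perm (Fin 6)) (gr hr : Fin k → Equiv.Perm (Fin 6))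
    (hgNi : Fin.cons g₀ (Fin.cons g₁ gr) ∈ NielsenSet (k + 2))
    (hhNi : Fin.cons h₀ (Fin.cons h₁ hr) ∈ NielsenSet (k + 2))
    (hgne : g₀ ≠ g₁) (hgfix : FixedPts g₀ = FixedPts g₁)
    (hhne : h₀ ≠ h₁) (hhfix : FixedPts h₀ = FixedPts h₁)
    (hred : HurwitzEquiv (Fin.cons (g₀ * g₁) gr) (Fin.cons (h₀ * h₁) hr)) :
    HurwitzEquiv (Fin.cons g₀ (Fin.cons g₁ gr)) (Fin.cons h₀ (Fin.cons h₁ hr)) := by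
  have hcg := fun i => cc_of_order (hgNi.1 i) (hgNi.2.1 i)
  have hch := fun i => cc_of_order (hhNi.1 i) (hhNi.2.1 i)
  have e1 : ∀ (a : P6) {n : ℕ} (f : Fin n → P6),
      List.ofFn (Fin.cons a f : Fin (n + 1) → P6) = a :: List.ofFn f := by
    intro a n f
    rw [List.ofFn_succ]
    simp
  have hr1 := heq_of_hurwitz hred
  rw [e1, e1] at hr1
  apply hurwitz_of_heq
  rw [e1, e1, e1, e1]
  refine core (good_of_fix (hcg 0) (hcg 1) hgne hgfix) (good_of_fix (hch 0) (hch 1) hhne hhfix)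
    ?_ ?_ ?_ hr1
  · intro r hr'
    obtain ⟨i, rfl⟩ := (List.mem_ofFn' _ _).1 hr'
    exact hch i.succ.succ
  · intro x hx
    apply nielsen_com hgNi
    rw [e1, e1]
    exact hx
  · intro x hx
    apply nielsen_com hhNi
    rw [e1, e1]
    exact hx
end
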